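/- arXiv:1704.06950 — 5 statements merged into one kernel-verified Lean document; each statement's English description precedes it below -/
import Mathlib

section
/- A Lagrangian subspace L ⊆ S′ is complete if and only if both: (i) dim L = def(T₀), and (ii) there exists a GKN set t₁,…,t_m for T₀ (m = def(T₀)) such that L = {φx : x ∈ D(T₁), [x,tⱼ]_H = 0 for j = 1,…,m}. Moreover, in this case φ⁻¹(L) = {x ∈ D(T₁) : [x,tⱼ]_H = 0 for j = 1,…,m}. -/
open scoped ComplexInnerProductSpace

noncomputable section

variable {H : Type*} [NormedAddCommGroup H] [InnerProductSpace ℂ H] [CompleteSpace H]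

/-- The symplectic form `[x,y]_H = ⟪T₁x, y⟫_H - ⟪x, T₁y⟫_H` on the domain of `T₁`. -/
def sympForm (T₁ : H →ₗ.[ℂ] H) (x y : T₁.domain) : ℂ :=
  ⟪T₁ x, (y : H)⟫ - ⟪(x : H), T₁ y⟫

/-- The deficiency space `{x ∈ D(T₁) | T₁ x = c • x}`; `X₊ = defSpace T₁ I`,
`X₋ = defSpace T₁ (-I)`. -/
def defSpace (T₁ : H →ₗ.[ℂ] H) (c : ℂ) : Submodule ℂ T₁.domain :=
  LinearMap.ker (T₁.toFun - c • T₁.domain.subtype)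

/-- The deficiency index `def(T₀) := dim X₊`. -/
def defIndex (T₁ : H →ₗ.[ℂ] H) : ℕ :=
  Module.finrank ℂ (defSpace T₁ Complex.I)

/-- `D(T₀)` regarded as a submodule of `D(T₁)` (assuming `T₀ ≤ T₁`); the boundary
space is `S' := D(T₁) ⧸ D0 T₀ T₁` and `φ` is `Submodule.Quotient.mk`. -/
def D0 (T₀ T₁ : H →ₗ.[ℂ] H) : Submodule ℂ T₁.domain :=
  T₀.domain.comap T₁.domain.subtype

/-- A family `t₁, …, t_d ∈ D(T₁)` is a (partial) GKN family for `T₀` if it is linearly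
independent modulo `D(T₀)` and satisfies the symmetry conditions `[tᵢ,tⱼ]_H = 0`. -/
def IsGKNFamily (T₀ T₁ : H →ₗ.[ℂ] H) {d : ℕ} (t : Fin d → T₁.domain) : Prop :=
  (∀ α : Fin d → ℂ, ((∑ j, α j • t j : T₁.domain) : H) ∈ T₀.domain → ∀ j, α j = 0) ∧
  ∀ i j, sympForm T₁ (t i) (t j) = 0

/-- A subspace `L` of the boundary space `S' = D(T₁)/D(T₀)` is Lagrangian:
`[u : v]_{S'} = 0` for all `u, v ∈ L` (expressed via representatives). -/
def IsLagrangianRep (T₀ T₁ : H →ₗ.[ℂ] H) (L : Submodule ℂ (T₁.domain ⧸ D0 T₀ T₁)) : Prop :=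
  ∀ x y : T₁.domain, Submodule.Quotient.mk (p := D0 T₀ T₁) x ∈ L →
    Submodule.Quotient.mk (p := D0 T₀ T₁) y ∈ L → sympForm T₁ x y = 0

/-- A subspace `L ⊆ S'` is complete (as a Lagrangian): if `[u : v]_{S'} = 0` for all
`v ∈ L` then `u ∈ L` (expressed via representatives, `φ` being surjective). -/
def IsCompleteRep (T₀ T₁ : H →ₗ.[ℂ] H) (L : Submodule ℂ (T₁.domain ⧸ D0 T₀ T₁)) : Prop :=
  ∀ x : T₁.domain,
    (∀ y : T₁.domain, Submodule.Quotient.mk (p := D0 T₀ T₁) y ∈ L → sympForm T₁ x y = 0) →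
    Submodule.Quotient.mk (p := D0 T₀ T₁) x ∈ L

/-!
Von Neumann's formula identifies the boundary space `S'` with `X₊ × X₋`, and there
`[p + q : p + q] = 2i(‖q‖² - ‖p‖²)`. Hence a Lagrangian subspace `L` projects injectively to `X₊`
and to `X₋`, so `dim L ≤ dim X₊` and `dim L ≤ dim X₋`. A complete Lagrangian subspace is its own
orthogonal complement, whence `dim X₊ + dim X₋ = dim S' ≤ 2 dim L`. So all three dimensions agree,
and representatives of a basis of `L` form a GKN set which cuts out `L`.
-/

section OrthogonalComplement

variable {K₁ K V W : Type*} [Field K₁] [AddCommGroup V] [Module K₁ V]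
  [Field K] [AddCommGroup W] [Module K W] {σ : K₁ →+* K}

theorem mem_orthogonalBilin_iff_forall_basis (B : V →ₛₗ[σ] W →ₗ[K] K) {L : Submodule K₁ V}
    {ι : Type*} (b : Module.Basis ι K₁ L) {x : W} :
    x ∈ L.orthogonalBilin B ↔ ∀ i, B (b i) x = 0 := by
  refine ⟨fun hx i => hx _ (b i).2, fun hx v hv => ?_⟩
  have hzero : (B.flip x).comp L.subtype = 0 := b.ext hx
  exact LinearMap.congr_fun hzero ⟨v, hv⟩

theorem exists_linearMap_ker_eq_orthogonalBilin (B : V →ₛₗ[σ] W →ₗ[K] K) (L : Submodule K₁ V)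
    [FiniteDimensional K₁ L] :
    ∃ f : W →ₗ[K] (Fin (Module.finrank K₁ L) → K), LinearMap.ker f = L.orthogonalBilin B := by
  let b := Module.finBasis K₁ L
  refine ⟨LinearMap.pi fun i => B (b i), ?_⟩
  ext x
  rw [mem_orthogonalBilin_iff_forall_basis B b, LinearMap.mem_ker, funext_iff]
  rfl

theorem finiteDimensional_of_finiteDimensional_orthogonalBilin (B : V →ₛₗ[σ] W →ₗ[K] K)
    (L : Submodule K₁ V) [FiniteDimensional K₁ L] [FiniteDimensional K (L.orthogonalBilin B)] :
    FiniteDimensional K W := by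
  obtain ⟨f, hf⟩ := exists_linearMap_ker_eq_orthogonalBilin B L
  have : FiniteDimensional K (W ⧸ L.orthogonalBilin B) :=
    hf ▸ Module.Finite.equiv f.quotKerEquivRange.symm
  exact Module.Finite.of_submodule_quotient (L.orthogonalBilin B)

theorem finrank_le_finrank_add_finrank_orthogonalBilin (B : V →ₛₗ[σ] W →ₗ[K] K)
    (L : Submodule K₁ V) [FiniteDimensional K₁ L] [FiniteDimensional K (L.orthogonalBilin B)] :
    Module.finrank K W ≤ Module.finrank K₁ L + Module.finrank K (L.orthogonalBilin B) := by
  have := finiteDimensional_of_finiteDimensional_orthogonalBilin B L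
  obtain ⟨f, hf⟩ := exists_linearMap_ker_eq_orthogonalBilin B L
  calc Module.finrank K W
      = Module.finrank K (LinearMap.range f) + Module.finrank K (LinearMap.ker f) :=
        f.finrank_range_add_finrank_ker.symm
    _ ≤ Module.finrank K₁ L + Module.finrank K (L.orthogonalBilin B) := by
        rw [hf]
        gcongr
        simpa using (LinearMap.range f).finrank_le

end OrthogonalComplement

section GraphDecomposition

variable {𝕜 E F : Type*} [RCLike 𝕜]
  [NormedAddCommGroup E] [InnerProductSpace 𝕜 E] [CompleteSpace E]
  [NormedAddCommGroup F] [InnerProductSpace 𝕜 F]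

theorem exists_adjoint_apply_eq_of_forall_inner {T : E →ₗ.[𝕜] F}
    (hT : Dense (T.domain : Set E)) {w : E} {y : F}
    (h : ∀ u : T.domain, inner 𝕜 w (u : E) = inner 𝕜 y (T u)) :
    ∃ v : T.adjoint.domain, (v : F) = y ∧ T.adjoint v = w :=
  ⟨⟨y, LinearPMap.mem_adjoint_domain_of_exists y ⟨w, h⟩⟩, rfl, LinearPMap.adjoint_apply_eq hT _ h⟩

theorem exists_eq_graph_add_rotated_adjoint_graph [CompleteSpace F] {T : E →ₗ.[𝕜] F}
    (hT : Dense (T.domain : Set E)) (hclosed : T.IsClosed) (x : E) (y : F) :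
    ∃ (w : T.domain) (v : T.adjoint.domain), x = w - T.adjoint v ∧ y = T w + v := by
  let Γ : Submodule 𝕜 (WithLp 2 (E × F)) :=
    T.graph.comap (WithLp.linearEquiv 2 𝕜 (E × F)).toLinearMap
  have hΓ : IsClosed (Γ : Set (WithLp 2 (E × F))) :=
    IsClosed.preimage (WithLp.prod_continuous_ofLp 2 E F) hclosed
  have : CompleteSpace Γ := hΓ.completeSpace_coe
  obtain ⟨g, hg, z, hz, hgz⟩ := Γ.exists_add_mem_mem_orthogonal (WithLp.toLp 2 (x, y))
  obtain ⟨w, hw_fst, hw_snd⟩ := T.mem_graph_iff.1 (show WithLp.ofLp g ∈ T.graph from hg)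
  have horth (u : T.domain) : inner 𝕜 (-z.fst) (u : E) = inner 𝕜 z.snd (T u) := by
    have h := (Γ.mem_orthogonal' z).1 hz (WithLp.toLp 2 ((u : E), T u)) (T.mem_graph u)
    rw [WithLp.prod_inner_apply] at h
    rw [inner_neg_left]
    exact (eq_neg_of_add_eq_zero_right h).symm
  obtain ⟨v, hv, hTv⟩ := exists_adjoint_apply_eq_of_forall_inner hT horth
  refine ⟨w, v, ?_, ?_⟩
  · simpa [hw_fst, hTv] using congrArg WithLp.fst hgz
  · simpa [hw_snd, hv] using congrArg WithLp.snd hgz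

end GraphDecomposition

section SymplecticForm

omit [CompleteSpace H]

variable (T₁ : H →ₗ.[ℂ] H)

/-- `sympForm` as a sesquilinear map, conjugate-linear in the first argument like Mathlib's inner
product. -/
def sympFormₛₗ : T₁.domain →ₗ⋆[ℂ] T₁.domain →ₗ[ℂ] ℂ :=
  LinearMap.mk₂'ₛₗ (starRingEnd ℂ) (RingHom.id ℂ) (sympForm T₁)
    (fun x x' y => by
      simp only [sympForm, LinearPMap.map_add, Submodule.coe_add, inner_add_left]
      ring)
    (fun c x y => by
      simp only [sympForm, LinearPMap.map_smul, Submodule.coe_smul, inner_smul_left, smul_eq_mul]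
      ring)
    (fun x y y' => by
      simp only [sympForm, LinearPMap.map_add, Submodule.coe_add, inner_add_right]
      ring)
    (fun c x y => by
      simp only [sympForm, LinearPMap.map_smul, Submodule.coe_smul, inner_smul_right, smul_eq_mul,
        RingHom.id_apply]
      ring)

variable {T₁}

theorem sympForm_swap (x y : T₁.domain) :
    sympForm T₁ x y = -(starRingEnd ℂ) (sympForm T₁ y x) := by
  simp only [sympForm, map_sub, inner_conj_symm, neg_sub]

theorem sympForm_eq_zero_comm {x y : T₁.domain} : sympForm T₁ x y = 0 ↔ sympForm T₁ y x = 0 := by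
  rw [sympForm_swap, neg_eq_zero, map_eq_zero]

theorem mem_defSpace_iff {c : ℂ} {x : T₁.domain} : x ∈ defSpace T₁ c ↔ T₁ x = c • (x : H) :=
  LinearMap.mem_ker.trans sub_eq_zero

theorem sympForm_of_mem_defSpace {a b : ℂ} {x y : T₁.domain} (hx : x ∈ defSpace T₁ a)
    (hy : y ∈ defSpace T₁ b) :
    sympForm T₁ x y = ((starRingEnd ℂ) a - b) * ⟪(x : H), (y : H)⟫ := by
  rw [sympForm, mem_defSpace_iff.1 hx, mem_defSpace_iff.1 hy, inner_smul_left, inner_smul_right,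
    sub_mul]

theorem D0_le_ker_sympFormₛₗ_flip {T₀ : H →ₗ.[ℂ] H} (hadj : T₁.IsFormalAdjoint T₀)
    (hle : T₀ ≤ T₁) : D0 T₀ T₁ ≤ LinearMap.ker (sympFormₛₗ T₁).flip := by
  intro y (hy : (y : H) ∈ T₀.domain)
  have hTy : T₀ ⟨y, hy⟩ = T₁ y := hle.2 rfl
  ext x
  change ⟪T₁ x, (y : H)⟫ - ⟪(x : H), T₁ y⟫ = 0
  rw [← hTy, sub_eq_zero]
  exact hadj x ⟨y, hy⟩

theorem D0_le_ker_sympFormₛₗ {T₀ : H →ₗ.[ℂ] H} (hadj : T₁.IsFormalAdjoint T₀) (hle : T₀ ≤ T₁) :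
    D0 T₀ T₁ ≤ LinearMap.ker (sympFormₛₗ T₁) := fun x hx => by
  ext y
  exact sympForm_eq_zero_comm.1 <|
    LinearMap.congr_fun (D0_le_ker_sympFormₛₗ_flip hadj hle hx) y

end SymplecticForm

section BoundaryForm

omit [CompleteSpace H]

variable {T₀ T₁ : H →ₗ.[ℂ] H}

/-- The form `[φx : φy]` on the boundary space `S' = D(T₁)/D(T₀)`, conjugate-linear in its first
argument; the hypotheses make it well defined. -/
def boundaryForm (hadj : T₁.IsFormalAdjoint T₀) (hle : T₀ ≤ T₁) :
    (T₁.domain ⧸ D0 T₀ T₁) →ₗ⋆[ℂ] (T₁.domain ⧸ D0 T₀ T₁) →ₗ[ℂ] ℂ :=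
  LinearMap.liftQ₂ (D0 T₀ T₁) (D0 T₀ T₁) (sympFormₛₗ T₁) (D0_le_ker_sympFormₛₗ hadj hle)
    (D0_le_ker_sympFormₛₗ_flip hadj hle)

variable (hadj : T₁.IsFormalAdjoint T₀) (hle : T₀ ≤ T₁)

theorem boundaryForm_mk_mk (x y : T₁.domain) :
    boundaryForm hadj hle (Submodule.Quotient.mk x) (Submodule.Quotient.mk y) = sympForm T₁ x y :=
  rfl

variable {L : Submodule ℂ (T₁.domain ⧸ D0 T₀ T₁)}

theorem mk_mem_orthogonalBilin_boundaryForm {x : T₁.domain} :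
    Submodule.Quotient.mk x ∈ L.orthogonalBilin (boundaryForm hadj hle) ↔
      ∀ y : T₁.domain, Submodule.Quotient.mk (p := D0 T₀ T₁) y ∈ L → sympForm T₁ x y = 0 := by
  rw [Submodule.mem_orthogonalBilin_iff, (Submodule.Quotient.mk_surjective _).forall]
  simp only [boundaryForm_mk_mk, sympForm_eq_zero_comm (x := x)]

theorem isLagrangianRep_iff_le_orthogonalBilin :
    IsLagrangianRep T₀ T₁ L ↔ L ≤ L.orthogonalBilin (boundaryForm hadj hle) := by
  rw [SetLike.le_def, (Submodule.Quotient.mk_surjective _).forall]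
  simp only [mk_mem_orthogonalBilin_boundaryForm]
  exact forall_congr' fun x => forall_comm

theorem isCompleteRep_iff_orthogonalBilin_le :
    IsCompleteRep T₀ T₁ L ↔ L.orthogonalBilin (boundaryForm hadj hle) ≤ L := by
  rw [SetLike.le_def, (Submodule.Quotient.mk_surjective _).forall]
  simp only [mk_mem_orthogonalBilin_boundaryForm]
  rfl

theorem IsLagrangianRep.orthogonalBilin_eq (hLag : IsLagrangianRep T₀ T₁ L)
    (hcompl : IsCompleteRep T₀ T₁ L) : L.orthogonalBilin (boundaryForm hadj hle) = L :=
  le_antisymm ((isCompleteRep_iff_orthogonalBilin_le hadj hle).1 hcompl)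
    ((isLagrangianRep_iff_le_orthogonalBilin hadj hle).1 hLag)

end BoundaryForm

section DeficiencySpaces

omit [CompleteSpace H]

variable {T₀ T₁ : H →ₗ.[ℂ] H}

variable (T₀ T₁) in
/-- The map `(p, q) ↦ φ(p + q)` from `X₊ × X₋` to the boundary space. -/
def deficiencyMap : (defSpace T₁ Complex.I × defSpace T₁ (-Complex.I)) →ₗ[ℂ]
    (T₁.domain ⧸ D0 T₀ T₁) :=
  (D0 T₀ T₁).mkQ ∘ₗ (defSpace T₁ Complex.I).subtype.coprod (defSpace T₁ (-Complex.I)).subtype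

theorem sympForm_add_add_of_mem_defSpace {p p' q q' : T₁.domain}
    (hp : p ∈ defSpace T₁ Complex.I) (hp' : p' ∈ defSpace T₁ Complex.I)
    (hq : q ∈ defSpace T₁ (-Complex.I)) (hq' : q' ∈ defSpace T₁ (-Complex.I)) :
    sympForm T₁ (p + q) (p' + q') =
      2 * Complex.I * (⟪(q : H), (q' : H)⟫ - ⟪(p : H), (p' : H)⟫) := by
  calc sympForm T₁ (p + q) (p' + q')
      = sympForm T₁ p p' + sympForm T₁ q p' + (sympForm T₁ p q' + sympForm T₁ q q') := by
        change sympFormₛₗ T₁ (p + q) (p' + q') = _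
        simp only [map_add, LinearMap.add_apply]
        rfl
    _ = 2 * Complex.I * (⟪(q : H), (q' : H)⟫ - ⟪(p : H), (p' : H)⟫) := by
        rw [sympForm_of_mem_defSpace hp hp', sympForm_of_mem_defSpace hp hq',
          sympForm_of_mem_defSpace hq hp', sympForm_of_mem_defSpace hq hq']
        simp only [map_neg, Complex.conj_I]
        ring

theorem norm_eq_norm_of_sympForm_add_self_eq_zero {p q : T₁.domain}
    (hp : p ∈ defSpace T₁ Complex.I) (hq : q ∈ defSpace T₁ (-Complex.I))
    (h : sympForm T₁ (p + q) (p + q) = 0) : ‖p‖ = ‖q‖ := by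
  rw [sympForm_add_add_of_mem_defSpace hp hp hq hq, inner_self_eq_norm_sq_to_K,
    inner_self_eq_norm_sq_to_K] at h
  have hsq : ‖q‖ ^ 2 = ‖p‖ ^ 2 := by
    exact_mod_cast sub_eq_zero.1 ((mul_eq_zero.1 h).resolve_left (by simp))
  exact ((sq_eq_sq₀ (norm_nonneg q) (norm_nonneg p)).1 hsq).symm

theorem deficiencyMap_injective (hadj : T₁.IsFormalAdjoint T₀) (hle : T₀ ≤ T₁) :
    Function.Injective (deficiencyMap T₀ T₁) := by
  refine (injective_iff_map_eq_zero _).2 ?_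
  rintro ⟨⟨p, hp⟩, ⟨q, hq⟩⟩ h
  have hmem : p + q ∈ D0 T₀ T₁ := (Submodule.Quotient.mk_eq_zero _).1 h
  have hvanish (x : T₁.domain) : sympForm T₁ x (p + q) = 0 :=
    LinearMap.congr_fun (D0_le_ker_sympFormₛₗ_flip hadj hle hmem) x
  have hp_zero : p = 0 := by
    have hpp := hvanish (p + 0)
    rw [sympForm_add_add_of_mem_defSpace hp hp (zero_mem _) hq] at hpp
    simpa using hpp
  have hq_zero : q = 0 := by
    have hnorm := norm_eq_norm_of_sympForm_add_self_eq_zero hp hq (hvanish _)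
    rwa [hp_zero, norm_zero, eq_comm, norm_eq_zero] at hnorm
  subst hp_zero hq_zero
  rfl

/-- The decomposition is `z = ½(z - i T₁z) + ½(z + i T₁z)`. -/
theorem mem_defSpace_sup_defSpace_of_apply_apply_eq_neg {z z' : T₁.domain} (hz : T₁ z = z')
    (hz' : T₁ z' = -(z : H)) : z ∈ defSpace T₁ Complex.I ⊔ defSpace T₁ (-Complex.I) := by
  refine Submodule.mem_sup.2 ⟨(1 / 2 : ℂ) • (z - Complex.I • z'), mem_defSpace_iff.2 ?_,
    (1 / 2 : ℂ) • (z + Complex.I • z'), mem_defSpace_iff.2 ?_, by module⟩ <;>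
  · simp only [LinearPMap.map_smul, LinearPMap.map_sub, LinearPMap.map_add, hz, hz',
      Submodule.coe_smul, Submodule.coe_sub, Submodule.coe_add]
    match_scalars
    · linear_combination (1 / 2 : ℂ) * Complex.I_mul_I
    · ring

theorem IsLagrangianRep.norm_fst_eq_norm_snd {L : Submodule ℂ (T₁.domain ⧸ D0 T₀ T₁)}
    (hLag : IsLagrangianRep T₀ T₁ L)
    {a : defSpace T₁ Complex.I × defSpace T₁ (-Complex.I)} (ha : deficiencyMap T₀ T₁ a ∈ L) :
    ‖a.1‖ = ‖a.2‖ :=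
  norm_eq_norm_of_sympForm_add_self_eq_zero a.1.2 a.2.2 (hLag _ _ ha ha)

end DeficiencySpaces

section VonNeumann

variable {T₀ T₁ : H →ₗ.[ℂ] H}

variable (hdense : Dense (T₀.domain : Set H)) (hclosed : T₀.IsClosed) (hT₁ : T₁ = T₀.adjoint)
  (hle : T₀ ≤ T₁)

include hdense hclosed hT₁ hle

theorem D0_sup_defSpace_sup_defSpace_eq_top :
    D0 T₀ T₁ ⊔ (defSpace T₁ Complex.I ⊔ defSpace T₁ (-Complex.I)) = ⊤ := by
  subst hT₁
  refine eq_top_iff.2 fun x _ => ?_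
  obtain ⟨w, v, hx, hTx⟩ :=
    exists_eq_graph_add_rotated_adjoint_graph hdense hclosed (x : H) (T₀.adjoint x)
  let w' : T₀.adjoint.domain := ⟨w, hle.1 w.2⟩
  have hTw : T₀.adjoint w' = T₀ w := (hle.2 rfl).symm
  have hTz : T₀.adjoint (x - w') = v := by rw [LinearPMap.map_sub, hTx, hTw, add_sub_cancel_left]
  have hTv : T₀.adjoint v = -((x - w' : T₀.adjoint.domain) : H) := by
    rw [Submodule.coe_sub, hx]
    simp only [w', sub_sub_cancel_left, neg_neg]
  exact Submodule.mem_sup.2 ⟨w', w.2, x - w',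
    mem_defSpace_sup_defSpace_of_apply_apply_eq_neg hTz hTv, add_sub_cancel w' x⟩

theorem deficiencyMap_surjective : Function.Surjective (deficiencyMap T₀ T₁) := by
  refine (Submodule.Quotient.mk_surjective _).forall.2 fun x => ?_
  have hx : x ∈ D0 T₀ T₁ ⊔ (defSpace T₁ Complex.I ⊔ defSpace T₁ (-Complex.I)) :=
    D0_sup_defSpace_sup_defSpace_eq_top hdense hclosed hT₁ hle ▸ Submodule.mem_top
  obtain ⟨w, hw, z, hz, rfl⟩ := Submodule.mem_sup.1 hx
  obtain ⟨p, hp, q, hq, rfl⟩ := Submodule.mem_sup.1 hz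
  exact ⟨(⟨p, hp⟩, ⟨q, hq⟩), (Submodule.Quotient.eq _).2 (by simpa using hw)⟩

end VonNeumann

section Lagrangian

variable {T₀ T₁ : H →ₗ.[ℂ] H} {L : Submodule ℂ (T₁.domain ⧸ D0 T₀ T₁)}

variable (hdense : Dense (T₀.domain : Set H)) (hclosed : T₀.IsClosed) (hT₁ : T₁ = T₀.adjoint)
  (hle : T₀ ≤ T₁)

/-- Von Neumann's identification `X₊ × X₋ ≃ S'`. -/
def deficiencyEquiv : (defSpace T₁ Complex.I × defSpace T₁ (-Complex.I)) ≃ₗ[ℂ]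
    (T₁.domain ⧸ D0 T₀ T₁) :=
  LinearEquiv.ofBijective (deficiencyMap T₀ T₁)
    ⟨deficiencyMap_injective (hT₁ ▸ LinearPMap.adjoint_isFormalAdjoint hdense) hle,
      deficiencyMap_surjective hdense hclosed hT₁ hle⟩

theorem IsLagrangianRep.norm_deficiencyEquiv_symm (hLag : IsLagrangianRep T₀ T₁ L)
    (u : L) :
    ‖((deficiencyEquiv hdense hclosed hT₁ hle).symm u).1‖ =
      ‖((deficiencyEquiv hdense hclosed hT₁ hle).symm u).2‖ := by
  refine hLag.norm_fst_eq_norm_snd ?_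
  change deficiencyEquiv hdense hclosed hT₁ hle _ ∈ L
  rw [LinearEquiv.apply_symm_apply]
  exact u.2

include hdense hclosed hT₁ hle

theorem IsLagrangianRep.exists_injective_linearMap_left (hLag : IsLagrangianRep T₀ T₁ L) :
    ∃ f : L →ₗ[ℂ] defSpace T₁ Complex.I, Function.Injective f := by
  let e := deficiencyEquiv hdense hclosed hT₁ hle
  refine ⟨LinearMap.fst ℂ _ _ ∘ₗ e.symm.toLinearMap ∘ₗ L.subtype,
    (injective_iff_map_eq_zero _).2 fun u (hfst : (e.symm u).1 = 0) => ?_⟩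
  have hsnd : (e.symm u).2 = 0 := by
    rw [← norm_eq_zero, ← hLag.norm_deficiencyEquiv_symm, norm_eq_zero]
    exact hfst
  exact Subtype.ext (e.symm.map_eq_zero_iff.1 (Prod.ext hfst hsnd))

theorem IsLagrangianRep.exists_injective_linearMap_right (hLag : IsLagrangianRep T₀ T₁ L) :
    ∃ f : L →ₗ[ℂ] defSpace T₁ (-Complex.I), Function.Injective f := by
  let e := deficiencyEquiv hdense hclosed hT₁ hle
  refine ⟨LinearMap.snd ℂ _ _ ∘ₗ e.symm.toLinearMap ∘ₗ L.subtype,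
    (injective_iff_map_eq_zero _).2 fun u (hsnd : (e.symm u).2 = 0) => ?_⟩
  have hfst : (e.symm u).1 = 0 := by
    rw [← norm_eq_zero, hLag.norm_deficiencyEquiv_symm, norm_eq_zero]
    exact hsnd
  exact Subtype.ext (e.symm.map_eq_zero_iff.1 (Prod.ext hfst hsnd))

theorem IsLagrangianRep.finiteDimensional [FiniteDimensional ℂ (defSpace T₁ Complex.I)]
    (hLag : IsLagrangianRep T₀ T₁ L) : FiniteDimensional ℂ L := by
  obtain ⟨f, hf⟩ := hLag.exists_injective_linearMap_left hdense hclosed hT₁ hle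
  exact Module.Finite.of_injective f hf

theorem IsLagrangianRep.finrank_eq_defIndex [FiniteDimensional ℂ (defSpace T₁ Complex.I)]
    (hLag : IsLagrangianRep T₀ T₁ L) (hcompl : IsCompleteRep T₀ T₁ L) :
    Module.finrank ℂ L = defIndex T₁ := by
  let e := deficiencyEquiv hdense hclosed hT₁ hle
  let B := boundaryForm (hT₁ ▸ LinearPMap.adjoint_isFormalAdjoint hdense) hle
  have hself : L.orthogonalBilin B = L := hLag.orthogonalBilin_eq _ hle hcompl
  have hL_fin : FiniteDimensional ℂ L := hLag.finiteDimensional hdense hclosed hT₁ hle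
  have hLperp_fin : FiniteDimensional ℂ (L.orthogonalBilin B) := hself.symm ▸ hL_fin
  have hS_fin : FiniteDimensional ℂ (T₁.domain ⧸ D0 T₀ T₁) :=
    finiteDimensional_of_finiteDimensional_orthogonalBilin B L
  have hminus_fin : FiniteDimensional ℂ (defSpace T₁ (-Complex.I)) :=
    Module.Finite.of_injective (e.toLinearMap ∘ₗ LinearMap.inr ℂ _ _)
      (e.injective.comp LinearMap.inr_injective)
  obtain ⟨f, hf⟩ := hLag.exists_injective_linearMap_left hdense hclosed hT₁ hle
  obtain ⟨g, hg⟩ := hLag.exists_injective_linearMap_right hdense hclosed hT₁ hle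
  have hplus : Module.finrank ℂ L ≤ defIndex T₁ := f.finrank_le_finrank_of_injective hf
  have hminus := g.finrank_le_finrank_of_injective hg
  have hsum : defIndex T₁ + Module.finrank ℂ (defSpace T₁ (-Complex.I)) ≤
      Module.finrank ℂ L + Module.finrank ℂ L := by
    calc defIndex T₁ + Module.finrank ℂ (defSpace T₁ (-Complex.I))
        = Module.finrank ℂ (T₁.domain ⧸ D0 T₀ T₁) := by
          rw [← e.finrank_eq, Module.finrank_prod, defIndex]
      _ ≤ Module.finrank ℂ L + Module.finrank ℂ (L.orthogonalBilin B) :=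
          finrank_le_finrank_add_finrank_orthogonalBilin B L
      _ = Module.finrank ℂ L + Module.finrank ℂ L := by rw [hself]
  lia

end Lagrangian

section GKN

omit [CompleteSpace H]

variable {T₀ T₁ : H →ₗ.[ℂ] H} {L : Submodule ℂ (T₁.domain ⧸ D0 T₀ T₁)}

theorem linearIndependent_mk_iff {ι : Type*} [Fintype ι] {t : ι → T₁.domain} :
    LinearIndependent ℂ (fun j => (D0 T₀ T₁).mkQ (t j)) ↔
      ∀ α : ι → ℂ, ((∑ j, α j • t j : T₁.domain) : H) ∈ T₀.domain → ∀ j, α j = 0 := by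
  rw [Fintype.linearIndependent_iff]
  refine forall_congr' fun α => imp_congr_left ?_
  simp only [← map_smul, ← map_sum]
  exact Submodule.Quotient.mk_eq_zero _

theorem coe_eq_setOf_sympForm_eq_zero_iff (hadj : T₁.IsFormalAdjoint T₀) (hle : T₀ ≤ T₁)
    {ι : Type*} {t : ι → T₁.domain} :
    (L : Set (T₁.domain ⧸ D0 T₀ T₁)) =
        {u | ∃ x : T₁.domain, Submodule.Quotient.mk (p := D0 T₀ T₁) x = u ∧
          ∀ j, sympForm T₁ x (t j) = 0} ↔
      ∀ x : T₁.domain, Submodule.Quotient.mk (p := D0 T₀ T₁) x ∈ L ↔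
        ∀ j, sympForm T₁ x (t j) = 0 := by
  have hrep (x : T₁.domain) :
      (∃ x' : T₁.domain, Submodule.Quotient.mk (p := D0 T₀ T₁) x' = Submodule.Quotient.mk x ∧
        ∀ j, sympForm T₁ x' (t j) = 0) ↔ ∀ j, sympForm T₁ x (t j) = 0 := by
    refine ⟨?_, fun h => ⟨x, rfl, h⟩⟩
    rintro ⟨x', hx', h⟩ j
    rw [← boundaryForm_mk_mk hadj hle, ← hx', boundaryForm_mk_mk, h j]
  rw [Set.ext_iff, (Submodule.Quotient.mk_surjective _).forall]
  exact forall_congr' fun x => iff_congr Iff.rfl (hrep x)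

theorem isCompleteRep_of_mk_mem_iff {ι : Type*} {t : ι → T₁.domain}
    (hiso : ∀ i j, sympForm T₁ (t i) (t j) = 0)
    (hL : ∀ x : T₁.domain, Submodule.Quotient.mk (p := D0 T₀ T₁) x ∈ L ↔
      ∀ j, sympForm T₁ x (t j) = 0) : IsCompleteRep T₀ T₁ L :=
  fun x hx => (hL x).2 fun j => hx (t j) ((hL (t j)).2 (hiso j))

theorem IsLagrangianRep.exists_isGKNFamily [FiniteDimensional ℂ L]
    (hadj : T₁.IsFormalAdjoint T₀) (hle : T₀ ≤ T₁) (hLag : IsLagrangianRep T₀ T₁ L)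
    (hcompl : IsCompleteRep T₀ T₁ L) {d : ℕ} (hd : Module.finrank ℂ L = d) :
    ∃ t : Fin d → T₁.domain, IsGKNFamily T₀ T₁ t ∧
      ∀ x : T₁.domain, Submodule.Quotient.mk (p := D0 T₀ T₁) x ∈ L ↔
        ∀ j, sympForm T₁ x (t j) = 0 := by
  let b := Module.finBasisOfFinrankEq ℂ L hd
  choose t ht using fun j => Submodule.Quotient.mk_surjective (D0 T₀ T₁) (b j)
  have htL (j : Fin d) : Submodule.Quotient.mk (p := D0 T₀ T₁) (t j) ∈ L := by
    rw [ht j]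
    exact (b j).2
  have hindep : LinearIndependent ℂ (fun j => (D0 T₀ T₁).mkQ (t j)) := by
    simp only [Submodule.mkQ_apply, ht]
    exact b.linearIndependent.map' L.subtype L.ker_subtype
  refine ⟨t, ⟨linearIndependent_mk_iff.1 hindep, fun i j => hLag _ _ (htL i) (htL j)⟩,
    fun x => ?_⟩
  rw [← hLag.orthogonalBilin_eq hadj hle hcompl, mem_orthogonalBilin_iff_forall_basis _ b]
  simp only [← ht, boundaryForm_mk_mk, sympForm_eq_zero_comm (x := x)]

end GKN

theorem complete_lagrangian_characterization_general
    (T₀ T₁ : H →ₗ.[ℂ] H)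
    (hdense : Dense (T₀.domain : Set H))
    (hclosed : T₀.IsClosed)
    (hT₁ : T₁ = T₀.adjoint)
    (hle : T₀ ≤ T₁)
    [FiniteDimensional ℂ (defSpace T₁ Complex.I)]
    (L : Submodule ℂ (T₁.domain ⧸ D0 T₀ T₁))
    (hLag : IsLagrangianRep T₀ T₁ L) :
    (IsCompleteRep T₀ T₁ L ↔
      (Module.finrank ℂ L = defIndex T₁ ∧
        ∃ t : Fin (defIndex T₁) → T₁.domain, IsGKNFamily T₀ T₁ t ∧
          (L : Set (T₁.domain ⧸ D0 T₀ T₁)) =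
            {u | ∃ x : T₁.domain, Submodule.Quotient.mk (p := D0 T₀ T₁) x = u ∧
              ∀ j, sympForm T₁ x (t j) = 0})) ∧
    (∀ t : Fin (defIndex T₁) → T₁.domain,
      (L : Set (T₁.domain ⧸ D0 T₀ T₁)) =
        {u | ∃ x : T₁.domain, Submodule.Quotient.mk (p := D0 T₀ T₁) x = u ∧
          ∀ j, sympForm T₁ x (t j) = 0} →
      {x : T₁.domain | Submodule.Quotient.mk (p := D0 T₀ T₁) x ∈ L} =
        {x : T₁.domain | ∀ j, sympForm T₁ x (t j) = 0}) := by
  have hadj : T₁.IsFormalAdjoint T₀ := hT₁ ▸ LinearPMap.adjoint_isFormalAdjoint hdense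
  refine ⟨⟨fun hcompl => ?_, ?_⟩, fun t hL => ?_⟩
  · have := hLag.finiteDimensional hdense hclosed hT₁ hle
    have hdim := hLag.finrank_eq_defIndex hdense hclosed hT₁ hle hcompl
    obtain ⟨t, ht, hL⟩ := hLag.exists_isGKNFamily hadj hle hcompl hdim
    exact ⟨hdim, t, ht, (coe_eq_setOf_sympForm_eq_zero_iff hadj hle).2 hL⟩
  · rintro ⟨-, t, ht, hL⟩
    exact isCompleteRep_of_mk_mem_iff ht.2 ((coe_eq_setOf_sympForm_eq_zero_iff hadj hle).1 hL)
  · exact Set.ext ((coe_eq_setOf_sympForm_eq_zero_iff hadj hle).1 hL)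

/-!
STATEMENT 5: a Lagrangian subspace `L ⊆ S'` is complete iff (i) `dim L = def(T₀)` and
(ii) `L = {φx : x ∈ D(T₁), [x,tⱼ]_H = 0 (j = 1,…,m)}` for some GKN set `t₁,…,t_m` for
`T₀` (`m = def(T₀)`).  Moreover, in this case `φ⁻¹(L) = {x ∈ D(T₁) : [x,tⱼ]_H = 0 ∀ j}`.
-/
theorem complete_lagrangian_characterization
    (T₀ T₁ : H →ₗ.[ℂ] H)
    (hdense : Dense (T₀.domain : Set H))
    (hsymm : T₀.IsFormalAdjoint T₀)
    (hclosed : T₀.IsClosed)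
    (hT₁ : T₁ = T₀.adjoint)
    (hT₁adj : T₁.adjoint = T₀)
    (hle : T₀ ≤ T₁)
    [FiniteDimensional ℂ (defSpace T₁ Complex.I)]
    [FiniteDimensional ℂ (defSpace T₁ (-Complex.I))]
    (hpos : 1 ≤ defIndex T₁)
    (heq : Module.finrank ℂ (defSpace T₁ Complex.I)
         = Module.finrank ℂ (defSpace T₁ (-Complex.I)))
    (L : Submodule ℂ (T₁.domain ⧸ D0 T₀ T₁))
    (hLag : IsLagrangianRep T₀ T₁ L) :
    (IsCompleteRep T₀ T₁ L ↔
      (Module.finrank ℂ L = defIndex T₁ ∧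
        ∃ t : Fin (defIndex T₁) → T₁.domain, IsGKNFamily T₀ T₁ t ∧
          (L : Set (T₁.domain ⧸ D0 T₀ T₁)) =
            {u | ∃ x : T₁.domain, Submodule.Quotient.mk (p := D0 T₀ T₁) x = u ∧
              ∀ j, sympForm T₁ x (t j) = 0})) ∧
    (IsCompleteRep T₀ T₁ L →
      ∀ t : Fin (defIndex T₁) → T₁.domain, IsGKNFamily T₀ T₁ t →
        (L : Set (T₁.domain ⧸ D0 T₀ T₁)) =
          {u | ∃ x : T₁.domain, Submodule.Quotient.mk (p := D0 T₀ T₁) x = u ∧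
            ∀ j, sympForm T₁ x (t j) = 0} →
        {x : T₁.domain | Submodule.Quotient.mk (p := D0 T₀ T₁) x ∈ L} =
          {x : T₁.domain | ∀ j, sympForm T₁ x (t j) = 0}) :=
  have h := complete_lagrangian_characterization_general T₀ T₁ hdense hclosed hT₁ hle L hLag
  ⟨h.1, fun _ t _ => h.2 t⟩
end
end

section
/- If T is a self-adjoint operator in H with T₀ ⊆ T ⊆ T₁ (i.e., D(T₀) ⊆ D(T) ⊆ D(T₁) and T agrees with T₁ on D(T)), then L := {φx : x ∈ D(T)} is a complete Lagrangian subspace of the boundary space S′ of dimension def(T₀), and φ⁻¹(L) = D(T). -/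
/-!
Symmetry of `T` says that `[· , ·]_H` vanishes on `D(T)`; self-adjointness says that an
`x ∈ D(T₁)` with `[x, D(T)]_H = 0` lies in `D(T*) = D(T)`. So `φ(D(T))` is a complete Lagrangian.

For the dimension, fix a non-real `c`. The estimate `|im c| ‖x‖ ≤ ‖(A - c)x‖` for symmetric `A`
makes `T - c` a bijection of `D(T)` onto `H` and `ran (T₀ - c)` a closed subspace. Hence
`φ(D(T)) ≃ D(T) / D(T₀) ≃ H / ran (T₀ - c) ≃ ran (T₀ - c)ᗮ = ker (T₁ - c̄)`,
and `c = -i` gives `X₊`.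
-/

open scoped ComplexInnerProductSpace

noncomputable section

variable {H : Type*} [NormedAddCommGroup H] [InnerProductSpace ℂ H] [CompleteSpace H]

open scoped ComplexConjugate

section SubScalar

variable {R M : Type*} [CommRing R] [AddCommGroup M] [Module R M]

/-- The operator `A - c` as a linear map on the domain of `A`, so that range, kernel and bijectivity
of `LinearMap` apply. For `A = T₁`, `defSpace T₁ c` is by definition its kernel. -/
def subScalar (A : M →ₗ.[R] M) (c : R) : A.domain →ₗ[R] M :=
  A.toFun - c • A.domain.subtype

lemma subScalar_apply (A : M →ₗ.[R] M) (c : R) (x : A.domain) :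
    subScalar A c x = A x - c • (x : M) :=
  rfl

lemma map_comap_domain_subScalar {A B : M →ₗ.[R] M} (hAB : A ≤ B) (c : R) :
    (A.domain.comap B.domain.subtype).map (subScalar B c) = LinearMap.range (subScalar A c) := by
  have hval (x : A.domain) : subScalar B c ⟨x, hAB.1 x.2⟩ = subScalar A c x := by
    rw [subScalar_apply, subScalar_apply, hAB.2 (x := x) (y := ⟨x, hAB.1 x.2⟩) rfl]
  apply le_antisymm
  · rintro _ ⟨x, hx, rfl⟩
    exact ⟨⟨x, hx⟩, (hval ⟨x, hx⟩).symm⟩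
  · rintro _ ⟨x, rfl⟩
    exact ⟨⟨x, hAB.1 x.2⟩, x.2, hval x⟩

/-- If `B - c` is bijective, it identifies `D(B) / D(A)` with `M / ran (A - c)` for every
restriction `A` of `B`. -/
def domainQuotientEquivQuotientRange {A B : M →ₗ.[R] M} (hAB : A ≤ B) {c : R}
    (hB : Function.Bijective (subScalar B c)) :
    (B.domain ⧸ A.domain.comap B.domain.subtype) ≃ₗ[R] M ⧸ LinearMap.range (subScalar A c) :=
  Submodule.Quotient.equiv _ _ (LinearEquiv.ofBijective (subScalar B c) hB)
    (map_comap_domain_subScalar hAB c)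

end SubScalar

section Symmetric

variable {𝕜 E : Type*} [RCLike 𝕜] [NormedAddCommGroup E] [InnerProductSpace 𝕜 E]
  {A : E →ₗ.[𝕜] E} {c : 𝕜}

lemma isFormalAdjoint_of_le {F : Type*} [NormedAddCommGroup F] [InnerProductSpace 𝕜 F]
    {S S' : E →ₗ.[𝕜] F} {T T' : F →ₗ.[𝕜] E} (hS : S ≤ S') (hT : T ≤ T')
    (h : S'.IsFormalAdjoint T') : S.IsFormalAdjoint T := by
  intro x y
  rw [hS.2 (x := x) (y := ⟨x, hS.1 x.2⟩) rfl, hT.2 (x := y) (y := ⟨y, hT.1 y.2⟩) rfl]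
  exact h ⟨x, hS.1 x.2⟩ ⟨y, hT.1 y.2⟩

lemma norm_im_mul_norm_le_norm_subScalar (hA : A.IsFormalAdjoint A) (c : 𝕜) (x : A.domain) :
    ‖RCLike.im c‖ * ‖(x : E)‖ ≤ ‖subScalar A c x‖ := by
  have him_inner : RCLike.im (inner 𝕜 (x : E) (A x)) = 0 := by
    rw [← RCLike.conj_eq_iff_im, inner_conj_symm, hA x x]
  have him : RCLike.im (inner 𝕜 (x : E) (subScalar A c x)) = -(RCLike.im c * ‖(x : E)‖ ^ 2) := by
    rw [subScalar_apply, inner_sub_right, inner_smul_right, inner_self_eq_norm_sq_to_K, map_sub,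
      him_inner, zero_sub, ← RCLike.ofReal_pow, RCLike.im_mul_ofReal]
  have hsq : ‖(x : E)‖ * (‖RCLike.im c‖ * ‖(x : E)‖) ≤ ‖(x : E)‖ * ‖subScalar A c x‖ :=
    calc ‖(x : E)‖ * (‖RCLike.im c‖ * ‖(x : E)‖)
        = |RCLike.im (inner 𝕜 (x : E) (subScalar A c x))| := by
          rw [him, abs_neg, abs_mul, abs_of_nonneg (sq_nonneg ‖(x : E)‖), Real.norm_eq_abs]
          ring
      _ ≤ ‖inner 𝕜 (x : E) (subScalar A c x)‖ := RCLike.abs_im_le_norm _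
      _ ≤ ‖(x : E)‖ * ‖subScalar A c x‖ := norm_inner_le_norm _ _
  rcases (norm_nonneg (x : E)).eq_or_lt with hx | hx
  · simp only [← hx, mul_zero, norm_nonneg]
  · exact le_of_mul_le_mul_left hsq hx

lemma injective_subScalar (hA : A.IsFormalAdjoint A) (hc : RCLike.im c ≠ 0) :
    Function.Injective (subScalar A c) := by
  refine (injective_iff_map_eq_zero _).2 fun x hx => ?_
  have hle := norm_im_mul_norm_le_norm_subScalar hA c x
  rw [hx, norm_zero] at hle
  have hnorm : ‖(x : E)‖ ≤ 0 := nonpos_of_mul_nonpos_right hle (norm_pos_iff.2 hc)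
  exact Subtype.ext (norm_le_zero_iff.1 hnorm)

lemma norm_graph_le_mul_norm_subScalar (hA : A.IsFormalAdjoint A) (hc : RCLike.im c ≠ 0)
    (x : A.domain) :
    ‖((x : E), A x)‖ ≤ (1 + (1 + ‖c‖) / ‖RCLike.im c‖) * ‖subScalar A c x‖ := by
  have hx : ‖(x : E)‖ ≤ ‖subScalar A c x‖ / ‖RCLike.im c‖ :=
    (le_div_iff₀' (norm_pos_iff.2 hc)).2 (norm_im_mul_norm_le_norm_subScalar hA c x)
  have hAx : ‖A x‖ ≤ ‖subScalar A c x‖ + ‖c‖ * ‖(x : E)‖ := by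
    calc ‖A x‖ = ‖subScalar A c x + c • (x : E)‖ := by rw [subScalar_apply, sub_add_cancel]
      _ ≤ ‖subScalar A c x‖ + ‖c‖ * ‖(x : E)‖ := norm_smul c (x : E) ▸ norm_add_le _ _
  have hsum : ‖(x : E)‖ + ‖A x‖ ≤ (1 + (1 + ‖c‖) / ‖RCLike.im c‖) * ‖subScalar A c x‖ := by
    calc ‖(x : E)‖ + ‖A x‖ ≤ ‖subScalar A c x‖ + (1 + ‖c‖) * ‖(x : E)‖ := by linarith
      _ ≤ ‖subScalar A c x‖ + (1 + ‖c‖) * (‖subScalar A c x‖ / ‖RCLike.im c‖) := by gcongr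
      _ = _ := by ring
  exact (max_le_add_of_nonneg (norm_nonneg _) (norm_nonneg _)).trans hsum

variable [CompleteSpace E]

lemma isClosed_range_subScalar (hA : A.IsFormalAdjoint A) (hcl : A.IsClosed)
    (hc : RCLike.im c ≠ 0) : IsClosed (LinearMap.range (subScalar A c) : Set E) := by
  let f : A.graph →L[𝕜] E :=
    (ContinuousLinearMap.snd 𝕜 E E - c • ContinuousLinearMap.fst 𝕜 E E).comp A.graph.subtypeL
  have hf (x : A.domain) : f ⟨(x, A x), A.mem_graph x⟩ = subScalar A c x := rfl
  have hgraph (p : A.graph) : ∃ x : A.domain, (⟨(x, A x), A.mem_graph x⟩ : A.graph) = p := by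
    obtain ⟨x, hx₁, hx₂⟩ := A.mem_graph_iff.1 p.2
    exact ⟨x, Subtype.ext (Prod.ext hx₁ hx₂)⟩
  have hrange : Set.range f = (LinearMap.range (subScalar A c) : Set E) := by
    ext y
    constructor
    · rintro ⟨p, rfl⟩
      obtain ⟨x, rfl⟩ := hgraph p
      exact ⟨x, rfl⟩
    · rintro ⟨x, rfl⟩
      exact ⟨_, hf x⟩
  have hanti : AntilipschitzWith (1 + (1 + ‖c‖₊) / ‖RCLike.im c‖₊) f :=
    f.antilipschitz_of_bound fun p => by
      obtain ⟨x, rfl⟩ := hgraph p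
      exact norm_graph_le_mul_norm_subScalar hA hc x
  have : CompleteSpace A.graph := IsClosed.completeSpace_coe (hs := hcl)
  exact hrange ▸ hanti.isClosed_range f.uniformContinuous

lemma orthogonal_range_subScalar (hd : Dense (A.domain : Set E)) (c : 𝕜) :
    (LinearMap.range (subScalar A c))ᗮ =
      (LinearMap.ker (subScalar A.adjoint (conj c))).map A.adjoint.domain.subtype := by
  ext y
  have hperp : y ∈ (LinearMap.range (subScalar A c))ᗮ ↔
      ∀ x : A.domain, inner 𝕜 (conj c • y) (x : E) = inner 𝕜 y (A x) := by
    simp only [Submodule.mem_orthogonal', LinearMap.mem_range, forall_exists_index,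
      forall_apply_eq_imp_iff]
    refine forall_congr' fun x => ?_
    rw [subScalar_apply, inner_sub_right, inner_smul_right, inner_smul_left, RCLike.conj_conj,
      sub_eq_zero, eq_comm]
  rw [hperp]
  constructor
  · intro hy
    have hmem : y ∈ A.adjoint.domain := LinearPMap.mem_adjoint_domain_of_exists y ⟨_, hy⟩
    exact ⟨⟨y, hmem⟩, sub_eq_zero.2 (LinearPMap.adjoint_apply_eq hd ⟨y, hmem⟩ hy), rfl⟩
  · rintro ⟨z, hz, rfl⟩ x
    have hz : A.adjoint z = conj c • (z : E) := sub_eq_zero.1 hz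
    exact hz ▸ LinearPMap.adjoint_isFormalAdjoint hd z x

lemma isFormalAdjoint_self_of_isSelfAdjoint (hA : IsSelfAdjoint A) : A.IsFormalAdjoint A := by
  have hadj := LinearPMap.adjoint_isFormalAdjoint hA.dense_domain
  rwa [LinearPMap.isSelfAdjoint_def.1 hA] at hadj

lemma bijective_subScalar_of_isSelfAdjoint (hA : IsSelfAdjoint A) (hc : RCLike.im c ≠ 0) :
    Function.Bijective (subScalar A c) := by
  have hsymm := isFormalAdjoint_self_of_isSelfAdjoint hA
  have hc' : RCLike.im (conj c) ≠ 0 := by rwa [RCLike.conj_im, neg_ne_zero]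
  have : CompleteSpace (LinearMap.range (subScalar A c)) :=
    (isClosed_range_subScalar hsymm hA.isClosed hc).completeSpace_coe
  refine ⟨injective_subScalar hsymm hc, LinearMap.range_eq_top.1 ?_⟩
  rw [← Submodule.orthogonal_eq_bot_iff, orthogonal_range_subScalar hA.dense_domain,
    LinearPMap.isSelfAdjoint_def.1 hA, LinearMap.ker_eq_bot.2 (injective_subScalar hsymm hc'),
    Submodule.map_bot]

/-- For closed symmetric `A` and non-real `c`, the quotient `E / ran (A - c)` is isomorphic to the
deficiency space `ker (A* - c̄)`, through the orthogonal complement of the range. -/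
def quotientRangeEquivKerAdjoint (hd : Dense (A.domain : Set E)) (hA : A.IsFormalAdjoint A)
    (hcl : A.IsClosed) (hc : RCLike.im c ≠ 0) :
    (E ⧸ LinearMap.range (subScalar A c)) ≃ₗ[𝕜]
      LinearMap.ker (subScalar A.adjoint (conj c)) :=
  have : CompleteSpace (LinearMap.range (subScalar A c)) :=
    (isClosed_range_subScalar hA hcl hc).completeSpace_coe
  Submodule.quotientEquivOfIsCompl _ _ (Submodule.isCompl_orthogonal _) ≪≫ₗ
    LinearEquiv.ofEq _ _ (orthogonal_range_subScalar hd c) ≪≫ₗ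
    (Submodule.equivMapOfInjective _ A.adjoint.domain.injective_subtype _).symm

/-- **von Neumann**: a self-adjoint extension `B` of a closed symmetric `A` enlarges the domain by
a copy of the deficiency space `ker (A* - c̄)`, for every non-real `c`. -/
def domainQuotientEquivKerAdjoint {B : E →ₗ.[𝕜] E} (hd : Dense (A.domain : Set E))
    (hcl : A.IsClosed) (hB : IsSelfAdjoint B) (hAB : A ≤ B) (hc : RCLike.im c ≠ 0) :
    (B.domain ⧸ A.domain.comap B.domain.subtype) ≃ₗ[𝕜]
      LinearMap.ker (subScalar A.adjoint (conj c)) :=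
  domainQuotientEquivQuotientRange hAB (bijective_subScalar_of_isSelfAdjoint hB hc) ≪≫ₗ
    quotientRangeEquivKerAdjoint hd
      (isFormalAdjoint_of_le hAB hAB (isFormalAdjoint_self_of_isSelfAdjoint hB)) hcl hc

end Symmetric

section BoundarySpace

variable {V : Type*} [NormedAddCommGroup V] [InnerProductSpace ℂ V] {T₀ T₁ T : V →ₗ.[ℂ] V}

/-- The image `{φ x : x ∈ D(T)}` of `D(T) ∩ D(T₁)` in the boundary space `D(T₁) / D(T₀)`. -/
def boundaryImage (T₀ T₁ T : V →ₗ.[ℂ] V) : Submodule ℂ (T₁.domain ⧸ D0 T₀ T₁) :=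
  (T.domain.comap T₁.domain.subtype).map (D0 T₀ T₁).mkQ

lemma mk_mem_boundaryImage_iff (hT₀T : T₀ ≤ T) (x : T₁.domain) :
    Submodule.Quotient.mk (p := D0 T₀ T₁) x ∈ boundaryImage T₀ T₁ T ↔ (x : V) ∈ T.domain := by
  have hle : D0 T₀ T₁ ≤ T.domain.comap T₁.domain.subtype := Submodule.comap_mono hT₀T.1
  change x ∈ (boundaryImage T₀ T₁ T).comap (D0 T₀ T₁).mkQ ↔ _
  rw [boundaryImage, Submodule.comap_map_mkQ, sup_eq_right.2 hle]
  rfl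

/-- `φ` identifies `D(T) / D(T₀)` with `φ(D(T))`. -/
def domainQuotientEquivBoundaryImage (T₀ : V →ₗ.[ℂ] V) (hTT₁ : T ≤ T₁) :
    (T.domain ⧸ D0 T₀ T) ≃ₗ[ℂ] boundaryImage T₀ T₁ T :=
  let φ : T.domain →ₗ[ℂ] T₁.domain ⧸ D0 T₀ T₁ := (D0 T₀ T₁).mkQ ∘ₗ Submodule.inclusion hTT₁.1
  have hker : D0 T₀ T = LinearMap.ker φ := by
    rw [LinearMap.ker_comp, Submodule.ker_mkQ]
    rfl
  have hrange : LinearMap.range φ = boundaryImage T₀ T₁ T := by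
    rw [LinearMap.range_comp, Submodule.range_inclusion]
    rfl
  Submodule.quotEquivOfEq _ _ hker ≪≫ₗ φ.quotKerEquivRange ≪≫ₗ LinearEquiv.ofEq _ _ hrange

lemma isLagrangianRep_boundaryImage (hT : T.IsFormalAdjoint T) (hT₀T : T₀ ≤ T) (hTT₁ : T ≤ T₁) :
    IsLagrangianRep T₀ T₁ (boundaryImage T₀ T₁ T) := by
  intro x y hx hy
  rw [mk_mem_boundaryImage_iff hT₀T] at hx hy
  have hsymm := hT ⟨x, hx⟩ ⟨y, hy⟩
  rw [hTT₁.2 (y := x) rfl, hTT₁.2 (y := y) rfl] at hsymm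
  exact sub_eq_zero.2 hsymm

lemma mem_adjoint_domain_of_sympForm_eq_zero [CompleteSpace V] (hTT₁ : T ≤ T₁) {x : T₁.domain}
    (hx : ∀ y : T₁.domain, (y : V) ∈ T.domain → sympForm T₁ x y = 0) :
    (x : V) ∈ T.adjoint.domain := by
  refine LinearPMap.mem_adjoint_domain_of_exists _ ⟨T₁ x, fun y => ?_⟩
  rw [hTT₁.2 (x := y) (y := ⟨y, hTT₁.1 y.2⟩) rfl]
  exact sub_eq_zero.1 (hx ⟨y, hTT₁.1 y.2⟩ y.2)

lemma isCompleteRep_boundaryImage [CompleteSpace V] (hT : T.adjoint ≤ T) (hT₀T : T₀ ≤ T)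
    (hTT₁ : T ≤ T₁) : IsCompleteRep T₀ T₁ (boundaryImage T₀ T₁ T) := by
  intro x hx
  simp only [mk_mem_boundaryImage_iff hT₀T] at hx ⊢
  exact hT.1 (mem_adjoint_domain_of_sympForm_eq_zero hTT₁ hx)

end BoundarySpace

theorem selfAdjoint_extension_gives_complete_lagrangian_general
    (T₀ T₁ T : H →ₗ.[ℂ] H)
    (hdense : Dense (T₀.domain : Set H))
    (hclosed : T₀.IsClosed)
    (hT₁ : T₁ = T₀.adjoint)
    (hT : IsSelfAdjoint T)
    (hT₀T : T₀ ≤ T) :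
    IsLagrangianRep T₀ T₁ (boundaryImage T₀ T₁ T) ∧
    IsCompleteRep T₀ T₁ (boundaryImage T₀ T₁ T) ∧
    (∀ c : ℂ, c.im ≠ 0 → Nonempty (boundaryImage T₀ T₁ T ≃ₗ[ℂ] defSpace T₁ c)) ∧
    ∀ x : T₁.domain,
      Submodule.Quotient.mk (p := D0 T₀ T₁) x ∈ boundaryImage T₀ T₁ T ↔ (x : H) ∈ T.domain := by
  subst hT₁
  have hsymm := isFormalAdjoint_self_of_isSelfAdjoint hT
  have hTT₁ : T ≤ T₀.adjoint :=
    LinearPMap.IsFormalAdjoint.le_adjoint hdense (isFormalAdjoint_of_le hT₀T le_rfl hsymm)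
  refine ⟨isLagrangianRep_boundaryImage hsymm hT₀T hTT₁,
    isCompleteRep_boundaryImage (LinearPMap.isSelfAdjoint_def.1 hT).le hT₀T hTT₁,
    fun c hc => ?_, mk_mem_boundaryImage_iff hT₀T⟩
  have hc' : RCLike.im (conj c) ≠ 0 := by rwa [RCLike.conj_im, neg_ne_zero]
  have e := domainQuotientEquivKerAdjoint hdense hclosed hT hT₀T hc'
  rw [Complex.conj_conj] at e
  exact ⟨(domainQuotientEquivBoundaryImage T₀ hTT₁).symm ≪≫ₗ e⟩

/-!
STATEMENT 6: if `T` is a self-adjoint operator with `T₀ ⊆ T ⊆ T₁`, then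
`L := {φx : x ∈ D(T)}` is a complete Lagrangian subspace of `S'` of dimension
`def(T₀)`, and `φ⁻¹(L) = D(T)`.
-/
theorem selfAdjoint_extension_gives_complete_lagrangian
    (T₀ T₁ : H →ₗ.[ℂ] H)
    (hdense : Dense (T₀.domain : Set H))
    (hsymm : T₀.IsFormalAdjoint T₀)
    (hclosed : T₀.IsClosed)
    (hT₁ : T₁ = T₀.adjoint)
    (hT₁adj : T₁.adjoint = T₀)
    (hle : T₀ ≤ T₁)
    [FiniteDimensional ℂ (defSpace T₁ Complex.I)]
    [FiniteDimensional ℂ (defSpace T₁ (-Complex.I))]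
    (hpos : 1 ≤ defIndex T₁)
    (heq : Module.finrank ℂ (defSpace T₁ Complex.I)
         = Module.finrank ℂ (defSpace T₁ (-Complex.I)))
    (T : H →ₗ.[ℂ] H)
    (hTsa : T.adjoint = T)
    (hT₀T : T₀ ≤ T) (hTT₁ : T ≤ T₁) :
    IsLagrangianRep T₀ T₁
        (Submodule.map (D0 T₀ T₁).mkQ (T.domain.comap T₁.domain.subtype)) ∧
    IsCompleteRep T₀ T₁
        (Submodule.map (D0 T₀ T₁).mkQ (T.domain.comap T₁.domain.subtype)) ∧
    Module.finrank ℂ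
        (Submodule.map (D0 T₀ T₁).mkQ (T.domain.comap T₁.domain.subtype)) = defIndex T₁ ∧
    {x : T₁.domain | Submodule.Quotient.mk (p := D0 T₀ T₁) x ∈
        Submodule.map (D0 T₀ T₁).mkQ (T.domain.comap T₁.domain.subtype)} =
      {x : T₁.domain | (x : H) ∈ T.domain} := by
  obtain ⟨hlag, hcomplete, hequiv, hmem⟩ :=
    selfAdjoint_extension_gives_complete_lagrangian_general T₀ T₁ T hdense hclosed hT₁ hTsa hT₀T
  exact ⟨hlag, hcomplete, (hequiv Complex.I (by simp)).some.finrank_eq, Set.ext hmem⟩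
end
end

section
/- If L is a complete Lagrangian subspace of the boundary space S′, then L has dimension def(T₀), and the operator T defined by Tx = T₁x on D(T) := {x ∈ D(T₁) : φx ∈ L} is a self-adjoint operator in H satisfying T₀ ⊆ T ⊆ T₁; moreover φ⁻¹(L) = D(T). -/
open scoped ComplexInnerProductSpace

noncomputable section

variable {H : Type*} [NormedAddCommGroup H] [InnerProductSpace ℂ H] [CompleteSpace H]

/-!
Self-adjointness of `T` is a direct translation: `L` isotropic says that `T` is symmetric, and
`L` complete says that every `y ∈ D(T†) ⊆ D(T₀†)` has its boundary value in `L`. For the dimension,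
let `z` be non-real. Symmetry gives `|Im z| ‖x‖ ≤ ‖(T - z̄) x‖`, so `T - z̄` is a bijection from
`D(T)` onto `H` (its range is closed with orthogonal complement `ker (T - z) = 0`), and it carries
`D(T₀)` onto the closed subspace `ran (T₀ - z̄)`. Hence
`L ≃ D(T) / D(T₀) ≃ H / ran (T₀ - z̄) ≃ ran (T₀ - z̄)ᗮ = ker (T₀† - z)`.
-/

section

open LinearPMap
open scoped ComplexConjugate

section FormalAdjoint

variable {𝕜 E F : Type*} [RCLike 𝕜] [NormedAddCommGroup E] [InnerProductSpace 𝕜 E]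
  [NormedAddCommGroup F] [InnerProductSpace 𝕜 F] {S T : E →ₗ.[𝕜] F}

theorem isFormalAdjoint_of_le_s7 {U : F →ₗ.[𝕜] E} (hST : S ≤ T) (hTU : T.IsFormalAdjoint U) :
    S.IsFormalAdjoint U := fun x y => by
  rw [hST.2 (x := x) (y := ⟨x, hST.1 x.2⟩) rfl]
  exact hTU ⟨x, hST.1 x.2⟩ y

theorem adjoint_le_adjoint [CompleteSpace E] (hS : Dense (S.domain : Set E)) (hST : S ≤ T) :
    T† ≤ S† :=
  (isFormalAdjoint_of_le_s7 hST (adjoint_isFormalAdjoint (hS.mono hST.1)).symm).le_adjoint hS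

theorem isFormalAdjoint_of_isSelfAdjoint [CompleteSpace E] {A : E →ₗ.[𝕜] E}
    (hA : IsSelfAdjoint A) : A.IsFormalAdjoint A := by
  simpa only [isSelfAdjoint_def.1 hA] using adjoint_isFormalAdjoint hA.dense_domain

end FormalAdjoint

section Shift

variable {E : Type*} [NormedAddCommGroup E] [InnerProductSpace ℂ E] {S T : E →ₗ.[ℂ] E} {z : ℂ}

/-- The shifted operator `T - z` as a linear map on the domain of `T`; by definition its kernel is
`defSpace T z`. -/
def shift (T : E →ₗ.[ℂ] E) (z : ℂ) : T.domain →ₗ[ℂ] E :=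
  T.toFun - z • T.domain.subtype

theorem shift_apply (T : E →ₗ.[ℂ] E) (z : ℂ) (x : T.domain) : shift T z x = T x - z • (x : E) :=
  rfl

theorem map_shift_D0 (hST : S ≤ T) (z : ℂ) :
    (D0 S T).map (shift T z) = LinearMap.range (shift S z) := by
  have shift_eq (x : S.domain) : shift S z x = shift T z ⟨x, hST.1 x.2⟩ := by
    rw [shift_apply, shift_apply, hST.2 (y := ⟨x, hST.1 x.2⟩) rfl]
  ext y
  constructor
  · rintro ⟨x, hx, rfl⟩
    exact ⟨⟨x, hx⟩, shift_eq ⟨x, hx⟩⟩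
  · rintro ⟨x, rfl⟩
    exact ⟨⟨x, hST.1 x.2⟩, x.2, (shift_eq x).symm⟩

theorem abs_im_mul_norm_le_norm_shift (hT : T.IsFormalAdjoint T) (z : ℂ) (x : T.domain) :
    |z.im| * ‖(x : E)‖ ≤ ‖shift T z x‖ := by
  have im_inner : (⟪(x : E), T x⟫).im = 0 := by
    rw [← Complex.conj_eq_iff_im, inner_conj_symm, hT x x]
  have im_inner_shift : (⟪(x : E), shift T z x⟫).im = -z.im * ‖(x : E)‖ ^ 2 := by
    have inner_self : ⟪(x : E), (x : E)⟫ = (‖(x : E)‖ ^ 2 : ℝ) := by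
      exact_mod_cast inner_self_eq_norm_sq_to_K (x : E)
    rw [shift_apply, inner_sub_right, inner_smul_right, inner_self, Complex.sub_im, im_inner,
      Complex.im_mul_ofReal]
    ring
  rcases (norm_nonneg (x : E)).eq_or_lt with hx | hx
  · simp [← hx]
  · refine le_of_mul_le_mul_left ?_ hx
    calc ‖(x : E)‖ * (|z.im| * ‖(x : E)‖) = |(⟪(x : E), shift T z x⟫).im| := by
          rw [im_inner_shift, abs_mul, abs_neg, abs_of_nonneg (sq_nonneg ‖(x : E)‖)]; ring
      _ ≤ ‖⟪(x : E), shift T z x⟫‖ := Complex.abs_im_le_norm _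
      _ ≤ ‖(x : E)‖ * ‖shift T z x‖ := norm_inner_le_norm _ _

theorem defSpace_eq_bot (hT : T.IsFormalAdjoint T) (hz : z.im ≠ 0) : defSpace T z = ⊥ := by
  refine (Submodule.eq_bot_iff _).2 fun x hx => ?_
  have hx : shift T z x = 0 := hx
  have bound := abs_im_mul_norm_le_norm_shift hT z x
  rw [hx, norm_zero] at bound
  have : ‖(x : E)‖ ≤ 0 := nonpos_of_mul_nonpos_right bound (abs_pos.2 hz)
  exact Subtype.ext (norm_le_zero_iff.1 this)

variable [CompleteSpace E]

theorem isClosed_range_shift (hT : T.IsFormalAdjoint T) (hclosed : T.IsClosed) (hz : z.im ≠ 0) :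
    IsClosed (LinearMap.range (shift T z) : Set E) := by
  have : CompleteSpace T.graph := IsClosed.completeSpace_coe (hs := hclosed)
  let g : T.graph →L[ℂ] E :=
    (ContinuousLinearMap.snd ℂ E E - z • ContinuousLinearMap.fst ℂ E E) ∘L T.graph.subtypeL
  have range_g : Set.range g = LinearMap.range (shift T z) := by
    ext y
    constructor
    · rintro ⟨⟨⟨_, _⟩, hab⟩, rfl⟩
      obtain ⟨x, rfl, rfl⟩ := (mem_graph_iff T).1 hab
      exact ⟨x, rfl⟩
    · rintro ⟨x, rfl⟩
      exact ⟨⟨(x, T x), T.mem_graph x⟩, rfl⟩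
  obtain ⟨C, hC⟩ : ∃ C : NNReal, ∀ p, ‖p‖ ≤ C * ‖g p‖ := by
    refine ⟨1 + (1 + ‖z‖₊) * ‖z.im‖₊⁻¹, ?_⟩
    rintro ⟨⟨_, _⟩, hab⟩
    obtain ⟨x, rfl, rfl⟩ := (mem_graph_iff T).1 hab
    change max ‖(x : E)‖ ‖T x‖ ≤ (1 + (1 + ‖z‖) * |z.im|⁻¹) * ‖shift T z x‖
    have norm_x : ‖(x : E)‖ ≤ |z.im|⁻¹ * ‖shift T z x‖ :=
      (le_inv_mul_iff₀ (abs_pos.2 hz)).2 (abs_im_mul_norm_le_norm_shift hT z x)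
    have norm_Tx : ‖T x‖ ≤ ‖shift T z x‖ + ‖z‖ * ‖(x : E)‖ := by
      rw [← norm_smul, shift_apply]
      exact norm_le_norm_sub_add _ _
    have := norm_nonneg (shift T z x)
    have := mul_le_mul_of_nonneg_left norm_x (norm_nonneg z)
    refine max_le ?_ ?_ <;> nlinarith [norm_nonneg (x : E), norm_nonneg z]
  rw [← range_g]
  exact (AddMonoidHomClass.antilipschitz_of_bound g hC).isClosed_range g.uniformContinuous

theorem orthogonal_range_shift (hT : Dense (T.domain : Set E)) (z : ℂ) :
    (LinearMap.range (shift T (conj z)))ᗮ = (defSpace T† z).map T†.domain.subtype := by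
  have inner_shift (w : E) (x : T.domain) :
      ⟪w, shift T (conj z) x⟫ = ⟪w, T x⟫ - ⟪z • w, (x : E)⟫ := by
    rw [shift_apply, inner_sub_right, inner_smul_right, inner_smul_left]
  ext w
  rw [Submodule.mem_orthogonal']
  constructor
  · intro hw
    have formal (x : T.domain) : ⟪z • w, (x : E)⟫ = ⟪w, T x⟫ := by
      rw [eq_comm, ← sub_eq_zero, ← inner_shift]
      exact hw _ ⟨x, rfl⟩
    have hw_mem : w ∈ T†.domain := mem_adjoint_domain_of_exists w ⟨z • w, formal⟩
    exact ⟨⟨w, hw_mem⟩, sub_eq_zero.2 (adjoint_apply_eq hT ⟨w, hw_mem⟩ formal), rfl⟩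
  · rintro ⟨w, hw, rfl⟩ _ ⟨x, rfl⟩
    have hw : T† w = z • (w : E) := sub_eq_zero.1 hw
    rw [inner_shift, Submodule.subtype_apply, ← hw, sub_eq_zero]
    exact (adjoint_isFormalAdjoint hT w x).symm

theorem range_shift_eq_top (hT : IsSelfAdjoint T) (hz : z.im ≠ 0) :
    LinearMap.range (shift T z) = ⊤ := by
  have hsymm := isFormalAdjoint_of_isSelfAdjoint hT
  have : CompleteSpace (LinearMap.range (shift T z)) :=
    (isClosed_range_shift hsymm hT.isClosed hz).completeSpace_coe
  rw [← Submodule.orthogonal_eq_bot_iff, ← Complex.conj_conj z,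
    orthogonal_range_shift hT.dense_domain, isSelfAdjoint_def.1 hT,
    defSpace_eq_bot hsymm (by simpa using hz), Submodule.map_bot]

/-- For self-adjoint `T` and non-real `z`, the bijection `T - z` from the domain of `T` onto the
whole space. -/
def shiftEquiv (hT : IsSelfAdjoint T) (hz : z.im ≠ 0) : T.domain ≃ₗ[ℂ] E :=
  have hsymm := isFormalAdjoint_of_isSelfAdjoint hT
  .ofBijective (shift T z) ⟨LinearMap.ker_eq_bot.1 (defSpace_eq_bot hsymm hz),
    LinearMap.range_eq_top.1 (range_shift_eq_top hT hz)⟩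

/-- The isomorphism `D(T) / D(S) ≃ ker (S† - z)`, for a self-adjoint extension `T` of a closed
densely defined symmetric operator `S` and non-real `z`. -/
def domainQuotientEquivDefSpace (hS : Dense (S.domain : Set E)) (hclosed : S.IsClosed)
    (hT : IsSelfAdjoint T) (hST : S ≤ T) (hz : z.im ≠ 0) :
    (T.domain ⧸ D0 S T) ≃ₗ[ℂ] defSpace S† z :=
  have hz' : (conj z).im ≠ 0 := by rwa [Complex.conj_im, neg_ne_zero]
  have hsymm : S.IsFormalAdjoint S :=
    isFormalAdjoint_of_le_s7 hST (isFormalAdjoint_of_le_s7 hST (isFormalAdjoint_of_isSelfAdjoint hT)).symm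
  let R := LinearMap.range (shift S (conj z))
  have : CompleteSpace R := (isClosed_range_shift hsymm hclosed hz').completeSpace_coe
  Submodule.Quotient.equiv (D0 S T) R (shiftEquiv hT hz') (map_shift_D0 hST (conj z)) ≪≫ₗ
    R.quotientEquivOfIsCompl Rᗮ R.isCompl_orthogonal ≪≫ₗ
    .ofEq _ _ (orthogonal_range_shift hS z) ≪≫ₗ
    (Submodule.equivMapOfInjective _ S†.domain.injective_subtype _).symm

end Shift

section BoundaryExtension

variable {E : Type*} [NormedAddCommGroup E] [InnerProductSpace ℂ E] {T₀ T₁ : E →ₗ.[ℂ] E}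
  {L : Submodule ℂ (T₁.domain ⧸ D0 T₀ T₁)}

/-- The restriction of `T₁` to the vectors whose boundary value lies in `L`. -/
def boundaryExtension (T₀ T₁ : E →ₗ.[ℂ] E) (L : Submodule ℂ (T₁.domain ⧸ D0 T₀ T₁)) :
    E →ₗ.[ℂ] E :=
  T₁.domRestrict ((L.comap (D0 T₀ T₁).mkQ).map T₁.domain.subtype)

theorem boundaryExtension_le : boundaryExtension T₀ T₁ L ≤ T₁ :=
  domRestrict_le

theorem boundaryExtension_domain :
    (boundaryExtension T₀ T₁ L).domain = (L.comap (D0 T₀ T₁).mkQ).map T₁.domain.subtype :=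
  inf_eq_left.2 (Submodule.map_subtype_le _ _)

theorem mem_boundaryExtension_domain (x : T₁.domain) :
    (x : E) ∈ (boundaryExtension T₀ T₁ L).domain ↔ (D0 T₀ T₁).mkQ x ∈ L := by
  rw [boundaryExtension_domain]
  exact Subtype.val_injective.mem_set_image (s := (L.comap (D0 T₀ T₁).mkQ : Set T₁.domain))

theorem le_boundaryExtension (hle : T₀ ≤ T₁) : T₀ ≤ boundaryExtension T₀ T₁ L := by
  have domain_le : T₀.domain ≤ (boundaryExtension T₀ T₁ L).domain := fun x hx => by
    rw [mem_boundaryExtension_domain ⟨x, hle.1 hx⟩, Submodule.mkQ_apply,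
      (Submodule.Quotient.mk_eq_zero (D0 T₀ T₁)).2 hx]
    exact L.zero_mem
  exact ⟨domain_le, fun x y hxy =>
    (hle.2 (y := ⟨x, hle.1 x.2⟩) rfl).trans (boundaryExtension_le.2 hxy.symm).symm⟩

/-- The isomorphism `D(T) / D(T₀) ≃ L`, for `T = boundaryExtension T₀ T₁ L`, induced by taking
boundary values. -/
def boundaryExtensionQuotientEquiv (L : Submodule ℂ (T₁.domain ⧸ D0 T₀ T₁)) :
    ((boundaryExtension T₀ T₁ L).domain ⧸ D0 T₀ (boundaryExtension T₀ T₁ L)) ≃ₗ[ℂ] L :=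
  let T := boundaryExtension T₀ T₁ L
  let boundaryValue : T.domain →ₗ[ℂ] T₁.domain ⧸ D0 T₀ T₁ :=
    (D0 T₀ T₁).mkQ ∘ₗ Submodule.inclusion boundaryExtension_le.1
  have ker_eq : D0 T₀ T = LinearMap.ker boundaryValue := by
    rw [LinearMap.ker_comp, Submodule.ker_mkQ]
    rfl
  have range_eq : LinearMap.range boundaryValue = L := by
    ext u
    constructor
    · rintro ⟨x, rfl⟩
      exact (mem_boundaryExtension_domain (Submodule.inclusion boundaryExtension_le.1 x)).1 x.2
    · intro hu
      obtain ⟨x, rfl⟩ := (D0 T₀ T₁).mkQ_surjective u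
      exact ⟨⟨x, (mem_boundaryExtension_domain x).2 hu⟩, rfl⟩
  Submodule.quotEquivOfEq _ _ ker_eq ≪≫ₗ boundaryValue.quotKerEquivRange ≪≫ₗ .ofEq _ _ range_eq

theorem IsLagrangianRep.isFormalAdjoint_boundaryExtension (hLag : IsLagrangianRep T₀ T₁ L) :
    (boundaryExtension T₀ T₁ L).IsFormalAdjoint (boundaryExtension T₀ T₁ L) := fun x y => by
  have hle : boundaryExtension T₀ T₁ L ≤ T₁ := boundaryExtension_le
  rw [hle.2 (x := x) (y := ⟨x, hle.1 x.2⟩) rfl, hle.2 (x := y) (y := ⟨y, hle.1 y.2⟩) rfl]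
  exact sub_eq_zero.1 <| hLag ⟨x, hle.1 x.2⟩ ⟨y, hle.1 y.2⟩
    ((mem_boundaryExtension_domain _).1 x.2) ((mem_boundaryExtension_domain _).1 y.2)

variable [CompleteSpace E]

theorem IsCompleteRep.adjoint_boundaryExtension_domain_le (hdense : Dense (T₀.domain : Set E))
    (hle : T₀ ≤ T₀†) {L : Submodule ℂ (T₀†.domain ⧸ D0 T₀ T₀†)} (hComp : IsCompleteRep T₀ T₀† L) :
    (boundaryExtension T₀ T₀† L)†.domain ≤ (boundaryExtension T₀ T₀† L).domain := by
  set T := boundaryExtension T₀ T₀† L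
  have hT₀T : T₀ ≤ T := le_boundaryExtension hle
  have hT : Dense (T.domain : Set E) := hdense.mono hT₀T.1
  have hadj : T† ≤ T₀† := adjoint_le_adjoint hdense hT₀T
  intro y hy
  refine (mem_boundaryExtension_domain ⟨y, hadj.1 hy⟩).2 (hComp _ fun x hx => ?_)
  let x' : T.domain := ⟨x, (mem_boundaryExtension_domain x).2 hx⟩
  have hTx : T x' = T₀† x := boundaryExtension_le.2 rfl
  have hTy : T† ⟨y, hy⟩ = T₀† ⟨y, hadj.1 hy⟩ := hadj.2 rfl
  rw [sympForm, sub_eq_zero, ← hTy, ← hTx]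
  exact adjoint_isFormalAdjoint hT ⟨y, hy⟩ x'

theorem isSelfAdjoint_boundaryExtension (hdense : Dense (T₀.domain : Set E)) (hle : T₀ ≤ T₀†)
    {L : Submodule ℂ (T₀†.domain ⧸ D0 T₀ T₀†)} (hLag : IsLagrangianRep T₀ T₀† L)
    (hComp : IsCompleteRep T₀ T₀† L) : IsSelfAdjoint (boundaryExtension T₀ T₀† L) := by
  have le_adjoint : boundaryExtension T₀ T₀† L ≤ (boundaryExtension T₀ T₀† L)† :=
    hLag.isFormalAdjoint_boundaryExtension.le_adjoint (hdense.mono (le_boundaryExtension hle).1)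
  exact isSelfAdjoint_def.2 (eq_of_le_of_domain_eq le_adjoint (le_adjoint.1.antisymm
    (hComp.adjoint_boundaryExtension_domain_le hdense hle))).symm

end BoundaryExtension

end

theorem complete_lagrangian_gives_selfAdjoint_extension_general
    (T₀ T₁ : H →ₗ.[ℂ] H)
    (hdense : Dense (T₀.domain : Set H))
    (hsymm : T₀.IsFormalAdjoint T₀)
    (hclosed : T₀.IsClosed)
    (hT₁ : T₁ = T₀.adjoint)
    (L : Submodule ℂ (T₁.domain ⧸ D0 T₀ T₁))
    (hLag : IsLagrangianRep T₀ T₁ L)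
    (hComp : IsCompleteRep T₀ T₁ L) :
    (∀ z : ℂ, z.im ≠ 0 → Nonempty (L ≃ₗ[ℂ] defSpace T₁ z)) ∧
    ∃ T : H →ₗ.[ℂ] H, T.adjoint = T ∧ T₀ ≤ T ∧ T ≤ T₁ ∧
      (T.domain : Set H) =
        Subtype.val '' {x : T₁.domain | Submodule.Quotient.mk (p := D0 T₀ T₁) x ∈ L} := by
  subst hT₁
  have hle : T₀ ≤ T₀.adjoint := hsymm.le_adjoint hdense
  have hT₀T : T₀ ≤ boundaryExtension T₀ T₀.adjoint L := le_boundaryExtension hle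
  have hT : IsSelfAdjoint (boundaryExtension T₀ T₀.adjoint L) :=
    isSelfAdjoint_boundaryExtension hdense hle hLag hComp
  refine ⟨fun z hz => ⟨(boundaryExtensionQuotientEquiv L).symm ≪≫ₗ
    domainQuotientEquivDefSpace hdense hclosed hT hT₀T hz⟩, _, hT, hT₀T, boundaryExtension_le, ?_⟩
  rw [boundaryExtension_domain]
  rfl

/-!
STATEMENT 7: if `L` is a complete Lagrangian subspace of `S'`, then `dim L = def(T₀)`
and the operator `T` with `Tx = T₁x` on `D(T) := {x ∈ D(T₁) : φx ∈ L}` is a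
self-adjoint operator with `T₀ ⊆ T ⊆ T₁`; moreover `φ⁻¹(L) = D(T)`.
-/
theorem complete_lagrangian_gives_selfAdjoint_extension
    (T₀ T₁ : H →ₗ.[ℂ] H)
    (hdense : Dense (T₀.domain : Set H))
    (hsymm : T₀.IsFormalAdjoint T₀)
    (hclosed : T₀.IsClosed)
    (hT₁ : T₁ = T₀.adjoint)
    (hT₁adj : T₁.adjoint = T₀)
    (hle : T₀ ≤ T₁)
    [FiniteDimensional ℂ (defSpace T₁ Complex.I)]
    [FiniteDimensional ℂ (defSpace T₁ (-Complex.I))]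
    (hpos : 1 ≤ defIndex T₁)
    (heq : Module.finrank ℂ (defSpace T₁ Complex.I)
         = Module.finrank ℂ (defSpace T₁ (-Complex.I)))
    (L : Submodule ℂ (T₁.domain ⧸ D0 T₀ T₁))
    (hLag : IsLagrangianRep T₀ T₁ L)
    (hComp : IsCompleteRep T₀ T₁ L) :
    Module.finrank ℂ L = defIndex T₁ ∧
    ∃ T : H →ₗ.[ℂ] H, T.adjoint = T ∧ T₀ ≤ T ∧ T ≤ T₁ ∧
      (T.domain : Set H) =
        Subtype.val '' {x : T₁.domain | Submodule.Quotient.mk (p := D0 T₀ T₁) x ∈ L} := by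
  obtain ⟨equiv, hT⟩ :=
    complete_lagrangian_gives_selfAdjoint_extension_general T₀ T₁ hdense hsymm hclosed hT₁ L
      hLag hComp
  exact ⟨(equiv Complex.I (by simp)).some.finrank_eq, hT⟩
end
end

section
/- If t₁,…,t_m is a GKN set for T₀ (m = def(T₀)), then the operator T defined by Tx = T₁x on D(T) := {x ∈ D(T₁) : [x,tⱼ]_H = 0 for j = 1,…,m} is a self-adjoint operator in H satisfying T₀ ⊆ T ⊆ T₁. -/
open scoped ComplexInnerProductSpace

noncomputable section

variable {H : Type*} [NormedAddCommGroup H] [InnerProductSpace ℂ H] [CompleteSpace H]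

/-!
Green's identity turns adjoints into symplectic complements: if `T₀ ≤ S ≤ T₁ = T₀*`, then `D(S*)` is
the complement of `D(S)` in `D(T₁)` for the form `[·,·]`. So `S` is self-adjoint exactly when `D(S)`
equals its own complement, and, taking `S = T₁`, the radical of the form is `D(T₁*) = D(T₀)`.

By von Neumann's formula `D(T₁) = D(T₀) + X₊ + X₋`, the quotient `D(T₁)/D(T₀)` has dimension at most
`2m`. A GKN set spans an isotropic subspace of dimension `m` there, and the complement of its span
has codimension `m`, so the two agree: the complement of a GKN set is its own complement.
-/

section LinearAlgebra

open Module

theorem finrank_quotient_dualCoannihilator {K V : Type*} [Field K] [AddCommGroup V] [Module K V]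
    (Φ : Submodule K (Dual K V)) [FiniteDimensional K Φ] :
    finrank K (V ⧸ Φ.dualCoannihilator) = finrank K Φ :=
  (LinearEquiv.ofBijective _ (Subspace.quotDualCoannihilatorToDual_bijective Φ)).finrank_eq.trans
    (Subspace.dual_finrank_eq (K := K) (V := Φ))

theorem finrank_quotient_add_finrank_map_mkQ {K V : Type*} [DivisionRing K] [AddCommGroup V]
    [Module K V] {W M : Submodule K V} [FiniteDimensional K (V ⧸ W)] (h : W ≤ M) :
    finrank K (V ⧸ M) + finrank K (M.map W.mkQ) = finrank K (V ⧸ W) := by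
  rw [← (Submodule.quotientQuotientEquivQuotient W M h).finrank_eq]
  exact (M.map W.mkQ).finrank_quotient_add_finrank

theorem finiteDimensional_quotient_of_sup_eq_top {K V : Type*} [DivisionRing K]
    [AddCommGroup V] [Module K V] {W S : Submodule K V} [FiniteDimensional K S] (h : W ⊔ S = ⊤) :
    FiniteDimensional K (V ⧸ W) :=
  Module.finite_def.2 <|
    (W.map_mkQ_eq_top S).2 h ▸ ((Submodule.fg_iff_finiteDimensional S).2 ‹_›).map _

theorem finrank_quotient_le_of_sup_eq_top {K V : Type*} [DivisionRing K] [AddCommGroup V]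
    [Module K V] {W S : Submodule K V} [FiniteDimensional K S] (h : W ⊔ S = ⊤) :
    finrank K (V ⧸ W) ≤ finrank K S := by
  rw [← finrank_top K (V ⧸ W), ← (W.map_mkQ_eq_top S).2 h]
  exact Submodule.finrank_map_le _ _

variable {K V ι : Type*} [Field K] [StarRing K] [AddCommGroup V] [Module K V]
  {B : V →ₗ⋆[K] V →ₗ[K] K} {t : ι → V}

theorem orthogonalBilin_top (hB : B.IsRefl) :
    (⊤ : Submodule K V).orthogonalBilin B = LinearMap.ker B := by
  ext x
  simp [LinearMap.ext_iff, hB.eq_iff (x := x)]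

theorem ker_le_orthogonalBilin (hB : B.IsRefl) (L : Submodule K V) :
    LinearMap.ker B ≤ L.orthogonalBilin B :=
  orthogonalBilin_top hB ▸ Submodule.orthogonalBilin_le le_top

theorem orthogonalBilin_sup_ker (L : Submodule K V) :
    (L ⊔ LinearMap.ker B).orthogonalBilin B = L.orthogonalBilin B := by
  refine le_antisymm (Submodule.orthogonalBilin_le le_sup_left) fun x hx y hy => ?_
  obtain ⟨l, hl, k, hk, rfl⟩ := Submodule.mem_sup.1 hy
  rw [map_add, LinearMap.mem_ker.1 hk, add_zero]
  exact hx l hl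

theorem mem_orthogonalBilin_span_range {x : V} :
    x ∈ (Submodule.span K (Set.range t)).orthogonalBilin B ↔ ∀ j, B (t j) x = 0 := by
  have h := Submodule.span_le (s := Set.range t) (p := LinearMap.ker (B.flip x))
  simpa [SetLike.le_def, Set.range_subset_iff] using h

theorem dualCoannihilator_span_range :
    (Submodule.span K (Set.range (B ∘ t))).dualCoannihilator =
      (Submodule.span K (Set.range t)).orthogonalBilin B := by
  ext x
  rw [mem_orthogonalBilin_span_range, ← SetLike.mem_coe, Submodule.coe_dualCoannihilator_span]
  simp

theorem linearIndependent_comp_of_mkQ_ker (ht : LinearIndependent K ((LinearMap.ker B).mkQ ∘ t)) :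
    LinearIndependent K (B ∘ t) :=
  ht.map_of_injective_injectiveₛ (starRingEnd K) ((LinearMap.ker B).liftQ B le_rfl).toAddMonoidHom
    (starRingEnd K).injective (LinearMap.ker_eq_bot.1 (Submodule.ker_liftQ_eq_bot _ _ _ le_rfl))
    fun c x => by simp

theorem finrank_quotient_orthogonalBilin_span_range [Fintype ι]
    (ht : LinearIndependent K ((LinearMap.ker B).mkQ ∘ t)) :
    finrank K (V ⧸ (Submodule.span K (Set.range t)).orthogonalBilin B) = Fintype.card ι := by
  have : FiniteDimensional K (Submodule.span K (Set.range (B ∘ t))) :=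
    FiniteDimensional.span_of_finite K (Set.finite_range _)
  rw [← dualCoannihilator_span_range, finrank_quotient_dualCoannihilator,
    finrank_span_eq_card (linearIndependent_comp_of_mkQ_ker ht)]

theorem orthogonalBilin_span_range_eq_span_sup_ker [Fintype ι] (hB : B.IsRefl)
    [FiniteDimensional K (V ⧸ LinearMap.ker B)]
    (hdim : finrank K (V ⧸ LinearMap.ker B) ≤ 2 * Fintype.card ι)
    (hli : LinearIndependent K ((LinearMap.ker B).mkQ ∘ t)) (ht : ∀ i j, B (t i) (t j) = 0) :
    (Submodule.span K (Set.range t)).orthogonalBilin B =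
      Submodule.span K (Set.range t) ⊔ LinearMap.ker B := by
  set L := Submodule.span K (Set.range t)
  set π := (LinearMap.ker B).mkQ
  have hL : L ≤ L.orthogonalBilin B := Submodule.span_le.2 <| Set.range_subset_iff.2 fun j =>
    mem_orthogonalBilin_span_range.2 fun i => ht i j
  have hker := ker_le_orthogonalBilin hB L
  have hLcard : finrank K (L.map π) = Fintype.card ι := by
    rw [Submodule.map_span, ← Set.range_comp, finrank_span_eq_card hli]
  have hdimM : finrank K ((L.orthogonalBilin B).map π) ≤ Fintype.card ι := by
    have hcodim : _ + finrank K ((L.orthogonalBilin B).map π) = _ :=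
      finrank_quotient_add_finrank_map_mkQ hker
    rw [finrank_quotient_orthogonalBilin_span_range hli] at hcodim
    omega
  have hmap : L.map π = (L.orthogonalBilin B).map π :=
    Submodule.eq_of_le_of_finrank_le (Submodule.map_mono hL) (hdimM.trans hLcard.ge)
  have hcomap := congrArg (Submodule.comap π) hmap
  rw [Submodule.comap_map_mkQ, Submodule.comap_map_mkQ, sup_eq_right.2 hker] at hcomap
  rw [← hcomap, sup_comm]

theorem orthogonalBilin_orthogonalBilin_span_range [Fintype ι] (hB : B.IsRefl)
    [FiniteDimensional K (V ⧸ LinearMap.ker B)]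
    (hdim : finrank K (V ⧸ LinearMap.ker B) ≤ 2 * Fintype.card ι)
    (hli : LinearIndependent K ((LinearMap.ker B).mkQ ∘ t)) (ht : ∀ i j, B (t i) (t j) = 0) :
    ((Submodule.span K (Set.range t)).orthogonalBilin B).orthogonalBilin B =
      (Submodule.span K (Set.range t)).orthogonalBilin B := by
  conv_lhs => rw [orthogonalBilin_span_range_eq_span_sup_ker hB hdim hli ht]
  exact orthogonalBilin_sup_ker _

end LinearAlgebra

section Adjoint

variable {𝕜 E F : Type*} [RCLike 𝕜] [NormedAddCommGroup E] [InnerProductSpace 𝕜 E]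
  [NormedAddCommGroup F] [InnerProductSpace 𝕜 F] [CompleteSpace E]

theorem adjoint_le_adjoint_s9 {T S : E →ₗ.[𝕜] F} (hT : Dense (T.domain : Set E)) (h : T ≤ S) :
    S.adjoint ≤ T.adjoint := by
  refine LinearPMap.IsFormalAdjoint.le_adjoint hT fun x y => ?_
  rw [LinearPMap.apply_comp_inclusion h x]
  exact (LinearPMap.adjoint_isFormalAdjoint (hT.mono h.1)).symm _ y

theorem exists_sub_adjoint_eq_and_add_eq [CompleteSpace F] {T : E →ₗ.[𝕜] F}
    (hT : Dense (T.domain : Set E)) (hclosed : T.IsClosed) (x : E) (y : F) :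
    ∃ (a : T.domain) (b : T.adjoint.domain), (a : E) - T.adjoint b = x ∧ T a + b = y := by
  -- In the Hilbert sum `E × F`, `Gᗮ` consists of the pairs `(-T* b, b)`.
  let e := (WithLp.linearEquiv 2 𝕜 (E × F)).symm
  let G : Submodule 𝕜 (WithLp 2 (E × F)) := T.graph.map e.toLinearMap
  have hG : IsClosed (G : Set (WithLp 2 (E × F))) := by
    rw [Submodule.map_coe, LinearEquiv.coe_coe, LinearEquiv.image_eq_preimage_symm]
    exact hclosed.preimage (WithLp.prod_continuous_ofLp _ _ _)
  have : CompleteSpace G := hG.completeSpace_coe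
  obtain ⟨_, ⟨p, hp, rfl⟩, q, hq, hpq⟩ := G.exists_add_mem_mem_orthogonal (WithLp.toLp 2 (x, y))
  obtain ⟨a, rfl⟩ := T.mem_graph_iff'.1 hp
  have hqG : (q.snd, -q.fst) ∈ T.graph.adjoint := by
    rw [Submodule.mem_adjoint_iff]
    intro u v huv
    have horth := (Submodule.mem_orthogonal _ _).1 hq _ (Submodule.mem_map_of_mem huv)
    rw [WithLp.prod_inner_apply] at horth
    simpa [e, add_comm] using horth
  rw [← LinearPMap.adjoint_graph_eq_graph_adjoint hT, LinearPMap.mem_graph_iff] at hqG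
  obtain ⟨b, hb, hTb⟩ := hqG
  refine ⟨a, b, ?_, ?_⟩
  · simpa [e, hTb] using congrArg (fun z => z.fst) hpq.symm
  · simpa [e, hb] using congrArg (fun z => z.snd) hpq.symm

end Adjoint

section SymplecticForm

variable {E : Type*} [NormedAddCommGroup E] [InnerProductSpace ℂ E] {S T A : E →ₗ.[ℂ] E}

/-- The form `[x,y]_H` of `sympForm` as a sesquilinear map, conjugate-linear in `x`. -/
def symplecticForm (A : E →ₗ.[ℂ] E) : A.domain →ₗ⋆[ℂ] A.domain →ₗ[ℂ] ℂ :=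
  LinearMap.mk₂'ₛₗ (starRingEnd ℂ) (RingHom.id ℂ) (sympForm A)
    (fun x y z => by simp only [sympForm, A.map_add, Submodule.coe_add, inner_add_left]; ring)
    (fun c x y => by
      simp only [sympForm, A.map_smul, Submodule.coe_smul, inner_smul_left, smul_eq_mul]; ring)
    (fun x y z => by simp only [sympForm, A.map_add, Submodule.coe_add, inner_add_right]; ring)
    (fun c x y => by
      simp only [sympForm, A.map_smul, Submodule.coe_smul, inner_smul_right, RingHom.id_apply,
        smul_eq_mul]
      ring)

theorem symplecticForm_eq_zero_iff {x y : A.domain} :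
    symplecticForm A x y = 0 ↔ ⟪A x, (y : E)⟫ = ⟪(x : E), A y⟫ :=
  sub_eq_zero

theorem isRefl_symplecticForm (A : E →ₗ.[ℂ] E) : (symplecticForm A).IsRefl := fun x y h => by
  rw [symplecticForm_eq_zero_iff] at h ⊢
  rw [← inner_conj_symm, ← h, inner_conj_symm]

theorem D0_le_D0_iff (hS : S ≤ A) (hT : T ≤ A) : D0 S A ≤ D0 T A ↔ S ≤ T := by
  refine ⟨fun h => ⟨fun x hx => h (x := ⟨x, hS.1 hx⟩) hx, fun x y hxy => ?_⟩,
    fun h => Submodule.comap_mono h.1⟩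
  rw [LinearPMap.apply_comp_inclusion hS x]
  exact (hT.2 hxy.symm).symm

theorem D0_inj (hS : S ≤ A) (hT : T ≤ A) : D0 S A = D0 T A ↔ S = T := by
  simp only [le_antisymm_iff, D0_le_D0_iff hS hT, D0_le_D0_iff hT hS]

theorem D0_domRestrict_map_subtype (M : Submodule ℂ A.domain) :
    D0 (A.domRestrict (M.map A.domain.subtype)) A = M := by
  ext x
  simp [D0]

theorem le_domRestrict_map_subtype_iff (hT : T ≤ A) {M : Submodule ℂ A.domain} :
    T ≤ A.domRestrict (M.map A.domain.subtype) ↔ D0 T A ≤ M := by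
  rw [← D0_le_D0_iff hT LinearPMap.domRestrict_le, D0_domRestrict_map_subtype]

theorem domain_domRestrict_map_subtype (M : Submodule ℂ A.domain) :
    (A.domRestrict (M.map A.domain.subtype)).domain = M.map A.domain.subtype :=
  inf_eq_left.2 (Submodule.map_subtype_le _ _)

theorem mem_defSpace {c : ℂ} {x : A.domain} : x ∈ defSpace A c ↔ A x = c • (x : E) :=
  sub_eq_zero

theorem mem_defSpace_sup_defSpace_of_sq_eq_neg {x y : A.domain} (hxy : A x = y)
    (hyx : A y = -(x : E)) : x ∈ defSpace A Complex.I ⊔ defSpace A (-Complex.I) := by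
  refine Submodule.mem_sup.2 ⟨(1 / 2 : ℂ) • (x - Complex.I • y), Submodule.smul_mem _ _ ?_,
    (1 / 2 : ℂ) • (x + Complex.I • y), Submodule.smul_mem _ _ ?_, by module⟩
  · rw [mem_defSpace, A.map_sub, A.map_smul, hxy, hyx, Submodule.coe_sub, Submodule.coe_smul,
      smul_sub, smul_smul, Complex.I_mul_I]
    module
  · rw [mem_defSpace, A.map_add, A.map_smul, hxy, hyx, Submodule.coe_add, Submodule.coe_smul,
      smul_add, smul_smul, neg_mul, Complex.I_mul_I]
    module

theorem IsGKNFamily.linearIndependent_mkQ {d : ℕ} {t : Fin d → A.domain}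
    (ht : IsGKNFamily T A t) : LinearIndependent ℂ ((D0 T A).mkQ ∘ t) := by
  refine Fintype.linearIndependent_iff.2 fun c hc => ht.1 c ?_
  have hsum : (D0 T A).mkQ (∑ j, c j • t j) = 0 := by simpa using hc
  exact (Submodule.Quotient.mk_eq_zero (D0 T A)).1 hsum

end SymplecticForm

section SymmetricOperator

variable {S T : H →ₗ.[ℂ] H}

theorem D0_adjoint (hT : Dense (T.domain : Set H)) (hTS : T ≤ S) (hS : S ≤ T.adjoint) :
    D0 S.adjoint T.adjoint = (D0 S T.adjoint).orthogonalBilin (symplecticForm T.adjoint) := by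
  ext y
  constructor
  · intro hy x hx
    have hadj := LinearPMap.adjoint_isFormalAdjoint (hT.mono hTS.1) ⟨y, hy⟩ ⟨x, hx⟩
    rw [(adjoint_le_adjoint_s9 hT hTS).2 (y := y) rfl, hS.2 (y := x) rfl] at hadj
    exact isRefl_symplecticForm _ _ _ (symplecticForm_eq_zero_iff.2 hadj)
  · intro hy
    refine LinearPMap.mem_adjoint_domain_of_exists _ ⟨T.adjoint y, fun x => ?_⟩
    have hxy := isRefl_symplecticForm _ _ _ (hy (Submodule.inclusion hS.1 x) x.2)
    rw [LinearPMap.apply_comp_inclusion hS x]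
    exact symplecticForm_eq_zero_iff.1 hxy

theorem adjoint_eq_self_iff_orthogonalBilin_D0 (hT : Dense (T.domain : Set H)) (hTS : T ≤ S)
    (hS : S ≤ T.adjoint) :
    S.adjoint = S ↔
      (D0 S T.adjoint).orthogonalBilin (symplecticForm T.adjoint) = D0 S T.adjoint := by
  rw [← D0_adjoint hT hTS hS, D0_inj (adjoint_le_adjoint_s9 hT hTS) hS]

theorem ker_symplecticForm_adjoint (hT : Dense (T.domain : Set H)) (hsymm : T ≤ T.adjoint) :
    LinearMap.ker (symplecticForm T.adjoint) = D0 T.adjoint.adjoint T.adjoint := by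
  rw [D0_adjoint hT hsymm le_rfl, D0, Submodule.comap_subtype_self,
    orthogonalBilin_top (isRefl_symplecticForm _)]

theorem D0_sup_defSpace_sup_defSpace (hT : Dense (T.domain : Set H)) (hclosed : T.IsClosed)
    (hsymm : T ≤ T.adjoint) :
    D0 T T.adjoint ⊔ (defSpace T.adjoint Complex.I ⊔ defSpace T.adjoint (-Complex.I)) = ⊤ := by
  refine eq_top_iff.2 fun x _ => ?_
  obtain ⟨a, b, hab, hTab⟩ := exists_sub_adjoint_eq_and_add_eq hT hclosed x (T.adjoint x)
  let a' : T.adjoint.domain := Submodule.inclusion hsymm.1 a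
  have hxa : T.adjoint (x - a') = b := by
    rw [LinearPMap.map_sub, ← hTab, LinearPMap.apply_comp_inclusion hsymm a, add_sub_cancel_left]
  have hb : T.adjoint b = -((x - a' : T.adjoint.domain) : H) := by
    simp [a', ← hab]
  rw [← add_sub_cancel a' x]
  exact Submodule.add_mem_sup a.2 (mem_defSpace_sup_defSpace_of_sq_eq_neg hxa hb)

theorem finiteDimensional_quotient_D0_adjoint (hT : Dense (T.domain : Set H))
    (hclosed : T.IsClosed) (hsymm : T ≤ T.adjoint)
    [FiniteDimensional ℂ (defSpace T.adjoint Complex.I)]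
    [FiniteDimensional ℂ (defSpace T.adjoint (-Complex.I))] :
    FiniteDimensional ℂ (T.adjoint.domain ⧸ D0 T T.adjoint) :=
  finiteDimensional_quotient_of_sup_eq_top (D0_sup_defSpace_sup_defSpace hT hclosed hsymm)

theorem finrank_quotient_D0_adjoint_le (hT : Dense (T.domain : Set H))
    (hclosed : T.IsClosed) (hsymm : T ≤ T.adjoint)
    [FiniteDimensional ℂ (defSpace T.adjoint Complex.I)]
    [FiniteDimensional ℂ (defSpace T.adjoint (-Complex.I))] :
    Module.finrank ℂ (T.adjoint.domain ⧸ D0 T T.adjoint) ≤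
      Module.finrank ℂ (defSpace T.adjoint Complex.I) +
        Module.finrank ℂ (defSpace T.adjoint (-Complex.I)) :=
  (finrank_quotient_le_of_sup_eq_top (D0_sup_defSpace_sup_defSpace hT hclosed hsymm)).trans
    (Submodule.finrank_add_le_finrank_add_finrank _ _)

theorem adjoint_domRestrict_eq_self (hT : Dense (T.domain : Set H)) (hsymm : T ≤ T.adjoint)
    {M : Submodule ℂ T.adjoint.domain} (hTM : D0 T T.adjoint ≤ M)
    (hM : M.orthogonalBilin (symplecticForm T.adjoint) = M) :
    (T.adjoint.domRestrict (M.map T.adjoint.domain.subtype)).adjoint =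
      T.adjoint.domRestrict (M.map T.adjoint.domain.subtype) := by
  rwa [adjoint_eq_self_iff_orthogonalBilin_D0 hT ((le_domRestrict_map_subtype_iff hsymm).2 hTM)
    LinearPMap.domRestrict_le, D0_domRestrict_map_subtype]

end SymmetricOperator

/-!
STATEMENT 9 (GKN-EM, sufficiency): if `t₁,…,t_m` is a GKN set for `T₀` (`m = def(T₀)`),
then the operator `T` with `Tx = T₁x` on
`D(T) := {x ∈ D(T₁) : [x,tⱼ]_H = 0, j = 1,…,m}` is self-adjoint and `T₀ ⊆ T ⊆ T₁`.
-/
theorem GKN_restriction_is_selfAdjoint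
    (T₀ T₁ : H →ₗ.[ℂ] H)
    (hdense : Dense (T₀.domain : Set H))
    (hsymm : T₀.IsFormalAdjoint T₀)
    (hclosed : T₀.IsClosed)
    (hT₁ : T₁ = T₀.adjoint)
    (hT₁adj : T₁.adjoint = T₀)
    (hle : T₀ ≤ T₁)
    [FiniteDimensional ℂ (defSpace T₁ Complex.I)]
    [FiniteDimensional ℂ (defSpace T₁ (-Complex.I))]
    (hpos : 1 ≤ defIndex T₁)
    (heq : Module.finrank ℂ (defSpace T₁ Complex.I)
         = Module.finrank ℂ (defSpace T₁ (-Complex.I)))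
    (t : Fin (defIndex T₁) → T₁.domain)
    (ht : IsGKNFamily T₀ T₁ t) :
    ∃ T : H →ₗ.[ℂ] H, T.adjoint = T ∧ T₀ ≤ T ∧ T ≤ T₁ ∧
      (T.domain : Set H) =
        Subtype.val '' {x : T₁.domain | ∀ j, sympForm T₁ x (t j) = 0} := by
  subst hT₁
  have hker : LinearMap.ker (symplecticForm T₀.adjoint) = D0 T₀ T₀.adjoint := by
    rw [ker_symplecticForm_adjoint hdense hle, hT₁adj]
  have hfin := finiteDimensional_quotient_D0_adjoint hdense hclosed hle
  have hdim := finrank_quotient_D0_adjoint_le hdense hclosed hle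
  rw [← heq, ← two_mul, ← defIndex, ← Fintype.card_fin (defIndex T₀.adjoint)] at hdim
  have hli := ht.linearIndependent_mkQ
  rw [← hker] at hfin hdim hli
  let M := (Submodule.span ℂ (Set.range t)).orthogonalBilin (symplecticForm T₀.adjoint)
  have hM : M.orthogonalBilin (symplecticForm T₀.adjoint) = M :=
    orthogonalBilin_orthogonalBilin_span_range (isRefl_symplecticForm _) hdim hli ht.2
  have hT₀M : D0 T₀ T₀.adjoint ≤ M :=
    hker ▸ ker_le_orthogonalBilin (isRefl_symplecticForm _) _
  refine ⟨T₀.adjoint.domRestrict (M.map T₀.adjoint.domain.subtype),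
    adjoint_domRestrict_eq_self hdense hle hT₀M hM, (le_domRestrict_map_subtype_iff hle).2 hT₀M,
    LinearPMap.domRestrict_le, ?_⟩
  rw [domain_domRestrict_map_subtype, Submodule.map_coe]
  refine congrArg (Subtype.val '' ·) (Set.ext fun x => mem_orthogonalBilin_span_range.trans ?_)
  exact forall_congr' fun j => (isRefl_symplecticForm _).eq_iff
end
end

section
/- The minimal operator T̂₀ is a closed, densely defined, symmetric operator in the Hilbert space H⊕W. -/
open scoped ComplexInnerProductSpace

noncomputable section

variable {H : Type*} [NormedAddCommGroup H] [InnerProductSpace ℂ H] [CompleteSpace H]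

variable {W : Type*} [NormedAddCommGroup W] [InnerProductSpace ℂ W] [FiniteDimensional ℂ W]

/-- The map `Ω : D(T₁) → W`, `Ωx := ∑ⱼ [x,tⱼ]_H ξⱼ`. -/
def Omega (T₁ : H →ₗ.[ℂ] H) {n : ℕ} (ξ : OrthonormalBasis (Fin n) ℂ W)
    (t : Fin n → T₁.domain) (x : T₁.domain) : W :=
  ∑ j, sympForm T₁ x (t j) • ξ j

/-- The symplectic form on `D(T̂₁) = D(T₁) × W`:
`[(x,a),(y,b)]_{H⊕W} := [x,y]_H - ⟪Ωx, b⟫_W + ⟪a, Ωy⟫_W`. -/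
def sympFormHW (T₁ : H →ₗ.[ℂ] H) {n : ℕ} (ξ : OrthonormalBasis (Fin n) ℂ W)
    (t : Fin n → T₁.domain) (x : T₁.domain) (a : W) (y : T₁.domain) (b : W) : ℂ :=
  sympForm T₁ x y - ⟪Omega T₁ ξ t x, b⟫ + ⟪a, Omega T₁ ξ t y⟫

/-!
Let `τ : W → D(T₁)` be the linear map with `τ ξⱼ = tⱼ`, so that the domain of `T̂₀` consists of the
`(x, a)` with `x - τ a ∈ D(T₀)`. It is dense as the preimage of a dense set under the open map
`(x, a) ↦ x - τ a`. Likewise, `((x, a), (y, b))` lies in the graph of `T̂₀` exactly when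
`(x - τ a, y - T₁ (τ a))` lies in the graph of `T₀` and `b = B a`, which is a closed condition since
`W` is finite-dimensional. For symmetry, expand `⟪T₀ x + T₁ (τ a), y + τ b⟫`: the diagonal terms are
handled by the symmetry of `T₀` and by `[tᵢ, tⱼ] = 0`, the mixed ones by `T₁ = T₀*`.
-/

section Basis

variable {𝕜 E F ι : Type*} [RCLike 𝕜]
  [SeminormedAddCommGroup E] [InnerProductSpace 𝕜 E] [AddCommGroup F] [Module 𝕜 F]

theorem inner_map_map_eq_of_basis (b : Module.Basis ι 𝕜 F) {τ σ : F →ₗ[𝕜] E}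
    (h : ∀ i j, inner 𝕜 (σ (b i)) (τ (b j)) = inner 𝕜 (τ (b i)) (σ (b j))) (x y : F) :
    inner 𝕜 (σ x) (τ y) = inner 𝕜 (τ x) (σ y) := by
  have hform : (innerₛₗ 𝕜 ∘ₛₗ σ).compl₂ τ = (innerₛₗ 𝕜 ∘ₛₗ τ).compl₂ σ :=
    LinearMap.ext_basis b b h
  exact LinearMap.congr_fun₂ hform x y

end Basis

section Definition

variable {R E F : Type*} [Ring R] [AddCommGroup E] [Module R E] [AddCommGroup F] [Module R F]

/-- The operator `(x + τ a, a) ↦ (T x + σ a, B a)` in `E ⊕ F`, for `x` in the domain of `T` and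
`a : F`. The minimal operator `T̂₀` is the case `T = T₀`, `σ = T₁ ∘ τ`. Membership of `z` in the
domain is encoded as `z.fst - τ z.snd ∈ T.domain`, which makes `x` and `a` functions of `z`. -/
def minimalOperator (T : E →ₗ.[R] E) (τ σ : F →ₗ[R] E) (B : F →ₗ[R] F) :
    WithLp 2 (E × F) →ₗ.[R] WithLp 2 (E × F) :=
  let e := WithLp.linearEquiv 2 R (E × F)
  let fst := LinearMap.fst R E F ∘ₗ e.toLinearMap
  let snd := LinearMap.snd R E F ∘ₗ e.toLinearMap
  let base := fst - τ ∘ₗ snd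
  { domain := T.domain.comap base
    toFun := e.symm.toLinearMap ∘ₗ
      (T.toFun ∘ₗ base.restrict (fun _ h ↦ h) + (σ ∘ₗ snd) ∘ₗ (T.domain.comap base).subtype).prod
        ((B ∘ₗ snd) ∘ₗ (T.domain.comap base).subtype) }

end Definition

namespace minimalOperator

section Graph

variable {R E F : Type*} [Ring R] [AddCommGroup E] [Module R E] [AddCommGroup F] [Module R F]
  {T : E →ₗ.[R] E} {τ σ : F →ₗ[R] E} {B : F →ₗ[R] F}

theorem mem_domain_iff {z : WithLp 2 (E × F)} :
    z ∈ (minimalOperator T τ σ B).domain ↔ z.fst - τ z.snd ∈ T.domain :=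
  Iff.rfl

theorem apply_eq (z : (minimalOperator T τ σ B).domain) :
    minimalOperator T τ σ B z =
      WithLp.toLp 2 (T ⟨_, mem_domain_iff.1 z.2⟩ + σ (z : WithLp 2 (E × F)).snd,
        B (z : WithLp 2 (E × F)).snd) :=
  rfl

theorem mem_graph_iff {z w : WithLp 2 (E × F)} :
    (z, w) ∈ (minimalOperator T τ σ B).graph ↔
      (z.fst - τ z.snd, w.fst - σ z.snd) ∈ T.graph ∧ w.snd = B z.snd := by
  simp only [LinearPMap.mem_graph_iff]
  constructor
  · rintro ⟨z, rfl, rfl⟩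
    exact ⟨⟨⟨_, mem_domain_iff.1 z.2⟩, rfl, by simp [apply_eq]⟩, by simp [apply_eq]⟩
  · rintro ⟨⟨x, hx, hTx⟩, hw⟩
    have hz : z.fst - τ z.snd ∈ T.domain := hx ▸ x.2
    obtain rfl : x = ⟨_, hz⟩ := Subtype.ext hx
    refine ⟨⟨z, hz⟩, rfl, WithLp.ofLp_injective 2 (Prod.ext ?_ hw.symm)⟩
    exact eq_sub_iff_add_eq.1 hTx

theorem mem_graph_iff_exists {z w : WithLp 2 (E × F)} :
    (z, w) ∈ (minimalOperator T τ σ B).graph ↔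
      ∃ (x : T.domain) (a : F),
        z = WithLp.toLp 2 ((x : E) + τ a, a) ∧ w = WithLp.toLp 2 (T x + σ a, B a) := by
  rw [mem_graph_iff, LinearPMap.mem_graph_iff]
  constructor
  · rintro ⟨⟨x, hx, hTx⟩, hw⟩
    exact ⟨x, z.snd, WithLp.ofLp_injective 2 (Prod.ext (eq_add_of_sub_eq hx.symm) rfl),
      WithLp.ofLp_injective 2 (Prod.ext (eq_add_of_sub_eq hTx.symm) hw)⟩
  · rintro ⟨x, a, rfl, rfl⟩
    exact ⟨⟨x, by simp, by simp⟩, rfl⟩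

theorem mem_graph_iff_exists_of_le {T₀ T₁ : E →ₗ.[R] E} (hle : T₀ ≤ T₁) {τ : F →ₗ[R] T₁.domain}
    {z w : WithLp 2 (E × F)} :
    (z, w) ∈ (minimalOperator T₀ (T₁.domain.subtype ∘ₗ τ) (T₁.toFun ∘ₗ τ) B).graph ↔
      ∃ (x : T₀.domain) (a : F),
        z = WithLp.toLp 2 ((x : E) + τ a, a) ∧
        w = WithLp.toLp 2 (T₁ (⟨x, hle.1 x.2⟩ + τ a), B a) := by
  have hT₁ (x : T₀.domain) (a : F) : T₁ (⟨x, hle.1 x.2⟩ + τ a) = T₀ x + T₁ (τ a) := by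
    rw [T₁.map_add, ← hle.2 (x := x) rfl]
  simp only [mem_graph_iff_exists, hT₁]
  rfl

theorem dense_domain [TopologicalSpace E] [ContinuousAdd E] [TopologicalSpace F]
    (hT : Dense (T.domain : Set E)) :
    Dense ((minimalOperator T τ σ B).domain : Set (WithLp 2 (E × F))) := by
  have hopen : IsOpenMap fun z : WithLp 2 (E × F) ↦ z.fst - τ z.snd := by
    refine IsOpenMap.of_sections fun z ↦ ⟨fun x ↦ WithLp.toLp 2 (x + τ z.snd, z.snd), ?_, ?_, ?_⟩
    · exact ((WithLp.prod_continuous_toLp 2 E F).comp (by fun_prop)).continuousAt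
    · exact WithLp.ofLp_injective 2 (Prod.ext (sub_add_cancel _ _) rfl)
    · exact fun x ↦ add_sub_cancel_right x _
  exact hT.preimage hopen

end Graph

section OfBasis

variable {R E F ι : Type*} [CommRing R] [AddCommGroup E] [Module R E] [AddCommGroup F] [Module R F]
  [Fintype ι]

theorem eq_of_mem_graph_iff {T₀ T₁ : E →ₗ.[R] E} (hle : T₀ ≤ T₁) (b : Module.Basis ι R F)
    (t : ι → T₁.domain) (B : F →ₗ[R] F) {S : WithLp 2 (E × F) →ₗ.[R] WithLp 2 (E × F)}
    (hS : ∀ z w, (z, w) ∈ S.graph ↔ ∃ (x : T₀.domain) (α : ι → R),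
      z = WithLp.toLp 2 ((x : E) + ∑ j, α j • (t j : E), ∑ j, α j • b j) ∧
      w = WithLp.toLp 2 (T₁ (⟨x, hle.1 x.2⟩ + ∑ j, α j • t j), B (∑ j, α j • b j))) :
    S = minimalOperator T₀ (T₁.domain.subtype ∘ₗ b.constr R t) (T₁.toFun ∘ₗ b.constr R t) B := by
  refine LinearPMap.eq_of_eq_graph (Submodule.ext fun ⟨z, w⟩ ↦ ?_)
  rw [hS, mem_graph_iff_exists_of_le hle]
  refine exists_congr fun x ↦ ?_
  have hsum (α : ι → R) : b.constr R t (∑ j, α j • b j) = ∑ j, α j • t j := by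
    simp only [map_sum, map_smul, Module.Basis.constr_basis]
  simp only [b.equivFun.symm.surjective.exists, b.equivFun_symm_apply, hsum,
    Submodule.coe_sum, Submodule.coe_smul]

end OfBasis

section IsClosed

variable {R E F : Type*} [CommRing R] [AddCommGroup E] [Module R E] [TopologicalSpace E]
  [ContinuousSub E] [AddCommGroup F] [Module R F] [TopologicalSpace F]
  {T : E →ₗ.[R] E} {τ σ : F →ₗ[R] E} {B : F →ₗ[R] F}

theorem isClosed [T2Space F] (hT : T.IsClosed) (hτ : Continuous τ) (hσ : Continuous σ)
    (hB : Continuous B) : (minimalOperator T τ σ B).IsClosed := by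
  have hgraph : ((minimalOperator T τ σ B).graph : Set _) =
      (fun p : WithLp 2 (E × F) × WithLp 2 (E × F) ↦
        (p.1.fst - τ p.1.snd, p.2.fst - σ p.1.snd)) ⁻¹' T.graph ∩
        {p | p.2.snd = B p.1.snd} :=
    Set.ext fun _ ↦ mem_graph_iff
  rw [LinearPMap.IsClosed, hgraph]
  exact (IsClosed.preimage (by fun_prop) hT).inter (isClosed_eq (by fun_prop) (by fun_prop))

end IsClosed

section Symmetry

variable {𝕜 E F : Type*} [RCLike 𝕜] [NormedAddCommGroup E] [InnerProductSpace 𝕜 E]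
  [NormedAddCommGroup F] [InnerProductSpace 𝕜 F]
  {T : E →ₗ.[𝕜] E} {τ σ : F →ₗ[𝕜] E} {B : F →ₗ[𝕜] F}

theorem isFormalAdjoint_self (hT : T.IsFormalAdjoint T)
    (hσT : ∀ (a : F) (x : T.domain), inner 𝕜 (σ a) (x : E) = inner 𝕜 (τ a) (T x))
    (hστ : ∀ a b, inner 𝕜 (σ a) (τ b) = inner 𝕜 (τ a) (σ b)) (hB : B.IsSymmetric) :
    (minimalOperator T τ σ B).IsFormalAdjoint (minimalOperator T τ σ B) := by
  intro z w
  obtain ⟨x, a, hz, hTz⟩ := mem_graph_iff_exists.1 ((minimalOperator T τ σ B).mem_graph z)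
  obtain ⟨y, b, hw, hTw⟩ := mem_graph_iff_exists.1 ((minimalOperator T τ σ B).mem_graph w)
  have hTσ : inner 𝕜 (T x) (τ b) = inner 𝕜 (x : E) (σ b) := by
    rw [← inner_conj_symm, ← hσT, inner_conj_symm]
  simp only [hz, hw, hTz, hTw, WithLp.prod_inner_apply, inner_add_left, inner_add_right]
  rw [hT x y, hTσ, hσT a y, hστ a b, hB a b]

end Symmetry

end minimalOperator

/-- For `T` densely defined, `hσT` says that `(τ a, σ a)` lies in the graph of `T†` for all `a`, and
`hστ` that the range of `τ` is isotropic for the form `[·, ·]` of `T†`. -/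
theorem minimal_operator_in_HW_closed_densely_defined_symmetric_general
    {𝕜 E F : Type*} [RCLike 𝕜] [NormedAddCommGroup E] [InnerProductSpace 𝕜 E]
    [NormedAddCommGroup F] [InnerProductSpace 𝕜 F]
    {T : E →ₗ.[𝕜] E} {τ σ : F →ₗ[𝕜] E} {B : F →ₗ[𝕜] F}
    (hdense : Dense (T.domain : Set E)) (hclosed : T.IsClosed) (hsymm : T.IsFormalAdjoint T)
    (hτ : Continuous τ) (hσ : Continuous σ) (hBc : Continuous B)
    (hσT : ∀ (a : F) (x : T.domain), inner 𝕜 (σ a) (x : E) = inner 𝕜 (τ a) (T x))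
    (hστ : ∀ a b, inner 𝕜 (σ a) (τ b) = inner 𝕜 (τ a) (σ b)) (hB : B.IsSymmetric) :
    Dense ((minimalOperator T τ σ B).domain : Set (WithLp 2 (E × F))) ∧
      (minimalOperator T τ σ B).IsClosed ∧
      (minimalOperator T τ σ B).IsFormalAdjoint (minimalOperator T τ σ B) :=
  ⟨minimalOperator.dense_domain hdense, minimalOperator.isClosed hclosed hτ hσ hBc,
    minimalOperator.isFormalAdjoint_self hsymm hσT hστ hB⟩

/-!
STATEMENT 12: the minimal operator `T̂₀` (with domain `{(x, Ψx) : x ∈ Δ₀}` and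
`T̂₀(x, Ψx) = (T₁x, BΨx)`, characterized here through its graph) is a closed,
densely defined, symmetric operator in `H ⊕ W = WithLp 2 (H × W)`.
-/
theorem minimal_operator_in_HW_closed_densely_defined_symmetric
    (T₀ T₁ : H →ₗ.[ℂ] H)
    (hdense : Dense (T₀.domain : Set H))
    (hsymm : T₀.IsFormalAdjoint T₀)
    (hclosed : T₀.IsClosed)
    (hT₁ : T₁ = T₀.adjoint)
    (hT₁adj : T₁.adjoint = T₀)
    (hle : T₀ ≤ T₁)
    [FiniteDimensional ℂ (defSpace T₁ Complex.I)]
    [FiniteDimensional ℂ (defSpace T₁ (-Complex.I))]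
    (hpos : 1 ≤ defIndex T₁)
    (heq : Module.finrank ℂ (defSpace T₁ Complex.I)
         = Module.finrank ℂ (defSpace T₁ (-Complex.I)))
    {n : ℕ} (hn : n = Module.finrank ℂ W) (hn1 : 1 ≤ n) (hnd : n ≤ defIndex T₁)
    (ξ : OrthonormalBasis (Fin n) ℂ W)
    (B : W →ₗ[ℂ] W) (hB : B.IsSymmetric)
    (t : Fin n → T₁.domain) (ht : IsGKNFamily T₀ T₁ t)
    (That0 : WithLp 2 (H × W) →ₗ.[ℂ] WithLp 2 (H × W))
    (hThat0 : ∀ z w : WithLp 2 (H × W), (z, w) ∈ That0.graph ↔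
      ∃ (x₀ : T₀.domain) (α : Fin n → ℂ),
        z = (WithLp.equiv 2 (H × W)).symm
              ((x₀ : H) + ∑ j, α j • (t j : H), ∑ j, α j • ξ j) ∧
        w = (WithLp.equiv 2 (H × W)).symm
              (T₁ ((⟨(x₀ : H), hle.1 x₀.2⟩ : T₁.domain) + ∑ j, α j • t j),
                B (∑ j, α j • ξ j)))
    :
    Dense (That0.domain : Set (WithLp 2 (H × W))) ∧
    That0.IsClosed ∧
    That0.IsFormalAdjoint That0 := by
  obtain rfl := minimalOperator.eq_of_mem_graph_iff hle ξ.toBasis t B (S := That0)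
    (by simpa using hThat0)
  have hadj : T₁.IsFormalAdjoint T₀ := hT₁ ▸ LinearPMap.adjoint_isFormalAdjoint hdense
  exact minimal_operator_in_HW_closed_densely_defined_symmetric_general hdense hclosed hsymm
    (LinearMap.continuous_of_finiteDimensional _) (LinearMap.continuous_of_finiteDimensional _)
    (LinearMap.continuous_of_finiteDimensional _)
    (fun _ ↦ hadj _)
    (inner_map_map_eq_of_basis ξ.toBasis fun i j ↦ by simpa using sub_eq_zero.1 (ht.2 i j)) hB
end
end
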